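/- Let V ∈ 𝒞 satisfy the Osgood condition |V(t,x) − V(t,y)| ≤ C(t)ρ(|x−y|) with C ∈ L¹(0,T) and ρ Osgood, and let X be the associated flow of homeomorphisms solving the ODE. Then for every norm-bounded signed-measure solution (μ_t) ∈ C([0,T], M(ℝ^d)) of the continuity equation and all s, t ∈ [0,T], one has μ_t = (X_s^t)_♯ μ_s. -/

import Mathlib

open MeasureTheory Set
open scoped ENNReal NNReal Topology

noncomputable section

/-- A solution of the ODE `γ' = V(t,γ)` on `[0,T]`, in integral form. -/
def IsSolution {d : ℕ} (T : ℝ) (hT : 0 ≤ T)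
    (V : ℝ → EuclideanSpace ℝ (Fin d) → EuclideanSpace ℝ (Fin d))
    (γ : C(Set.Icc (0:ℝ) T, EuclideanSpace ℝ (Fin d))) : Prop :=
  ∀ t : Set.Icc (0:ℝ) T,
    γ t - γ ⟨0, Set.left_mem_Icc.mpr hT⟩ =
      ∫ s in (0:ℝ)..(t:ℝ), V s (γ (Set.projIcc 0 T hT s))

/-- `X` is a flow of solutions of the ODE. -/
def IsFlow {d : ℕ} (T : ℝ) (hT : 0 ≤ T)
    (V : ℝ → EuclideanSpace ℝ (Fin d) → EuclideanSpace ℝ (Fin d))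
    (X : ℝ → ℝ → EuclideanSpace ℝ (Fin d) → EuclideanSpace ℝ (Fin d)) : Prop :=
  ∀ (t : ℝ) (ht : t ∈ Set.Icc (0:ℝ) T) (x : EuclideanSpace ℝ (Fin d)),
    ∃ γ : C(Set.Icc (0:ℝ) T, EuclideanSpace ℝ (Fin d)),
      IsSolution T hT V γ ∧ γ ⟨t, ht⟩ = x ∧
      (∀ s : Set.Icc (0:ℝ) T, X t s x = γ s) ∧
      (∀ γ' : C(Set.Icc (0:ℝ) T, EuclideanSpace ℝ (Fin d)),
        IsSolution T hT V γ' → γ' ⟨t, ht⟩ = x → γ' = γ)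

/-- Integral of a function against a signed measure, via the Jordan
decomposition. -/
def sInt {d : ℕ} (μ : MeasureTheory.SignedMeasure (EuclideanSpace ℝ (Fin d)))
    (f : EuclideanSpace ℝ (Fin d) → ℝ) : ℝ :=
  (∫ x, f x ∂μ.toJordanDecomposition.posPart) -
    ∫ x, f x ∂μ.toJordanDecomposition.negPart

/-- A signed-measure-valued solution of the continuity equation, in weak
(integral) form. -/
def IsSignedSolution {d : ℕ} (T : ℝ)
    (V : ℝ → EuclideanSpace ℝ (Fin d) → EuclideanSpace ℝ (Fin d))
    (μ : ℝ → MeasureTheory.SignedMeasure (EuclideanSpace ℝ (Fin d))) : Prop :=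
  ∀ u : EuclideanSpace ℝ (Fin d) → ℝ, ContDiff ℝ (⊤ : ℕ∞) u → HasCompactSupport u →
    ∀ s ∈ Set.Icc (0:ℝ) T, ∀ t ∈ Set.Icc (0:ℝ) T,
      sInt (μ t) u - sInt (μ s) u =
        ∫ σ in s..t, sInt (μ σ) (fun x => fderiv ℝ u x (V σ x))

/-!
The argument is dual: a test function `φ` is pulled back from time `t` to an earlier time by an
Euler scheme, each step composing it with the identity plus the drift of `V` mollified at a scale
`δ`. Measure time by `∫ C`. Besides terms of second order in the step, a step costs `ρ δ` times its
length times the Lipschitz constant of the function, per unit of total variation and uniformly over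
all bounded solutions; the Lipschitz constant grows exponentially at the rate `ρ δ / δ`. At the
scale `δ = 2⁻ᵏ` one keeps going until the Lipschitz constant has grown by a factor `3 / 2`, at a
cost of order `(3 / 2)ᵏ * 2⁻ᵏ`, and then passes to the scale `δ / 2`, so that the errors sum to a
geometric series. The time covered in this way is comparable to `∑ 2⁻ᵏ / ρ 2⁻ᵏ`, which diverges by
the Osgood condition: starting at an arbitrarily small scale one still reaches any earlier time,
with an arbitrarily small error. Dirac masses moving along trajectories are solutions too, so the
function obtained at time `s` is uniformly close to `φ ∘ X s t`. Hence `X s t` is continuous, and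
`∫ φ dμ_t = ∫ φ ∘ X s t dμ_s`.
-/

open Filter Metric
open scoped Convolution ContDiff

theorem hasCompactSupport_of_tsupport_subset_ball {E G : Type*} [PseudoMetricSpace E]
    [ProperSpace E] [Zero G] {k : E → G} {x : E} {r : ℝ} (hk : tsupport k ⊆ ball x r) :
    HasCompactSupport k :=
  (isCompact_closedBall x r).of_isClosed_subset (isClosed_tsupport k)
    (hk.trans ball_subset_closedBall)

section ScaledConvolution

variable {E F G H : Type*} [NormedAddCommGroup E] [NormedSpace ℝ E]
  [MeasureSpace E] [NormedAddCommGroup F] [NormedSpace ℝ F]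
  [NormedAddCommGroup G] [NormedSpace ℝ G] [NormedAddCommGroup H] [NormedSpace ℝ H]
  {k : E → G} {δ : ℝ} {f : E → F} (L : G →L[ℝ] F →L[ℝ] H)

/-- The convolution of `f` with the kernel `k` rescaled to width `δ` and normalised in `L¹`, that is
`δ⁻ᵈ k(δ⁻¹ ·)`. Conjugating a convolution at unit scale by the dilation keeps the dimension out. -/
def scaledConvolution (k : E → G) (δ : ℝ) (f : E → F) (x : E) : H :=
  (k ⋆[L, volume] fun z => f (δ • z)) (δ⁻¹ • x)

variable [FiniteDimensional ℝ E] [BorelSpace E]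
  [(volume : Measure E).IsAddHaarMeasure]

theorem contDiff_scaledConvolution [CompleteSpace H] {n : ℕ∞} (hk : ContDiff ℝ n k)
    (hkc : HasCompactSupport k) (hf : Continuous f) :
    ContDiff ℝ n (scaledConvolution L k δ f) :=
  (hkc.contDiff_convolution_left L hk
    (hf.comp (continuous_const_smul δ)).locallyIntegrable).comp (contDiff_const_smul _)

theorem hasFDerivAt_scaledConvolution (hk : ContDiff ℝ 1 k) (hkc : HasCompactSupport k)
    (hf : Continuous f) (x : E) :
    HasFDerivAt (scaledConvolution L k δ f)
      (δ⁻¹ • scaledConvolution (L.precompL E) (fderiv ℝ k) δ f x) x := by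
  have h := hkc.hasFDerivAt_convolution_left L hk
    (hf.comp (continuous_const_smul δ)).locallyIntegrable (μ := volume) (δ⁻¹ • x)
  refine (h.comp x ((hasFDerivAt_id x).const_smul δ⁻¹)).congr_fderiv ?_
  ext v
  simp [scaledConvolution, Function.comp_def]

theorem integral_precompL_fderiv_eq_zero (hk : ContDiff ℝ 1 k) (hkc : HasCompactSupport k)
    (c : F) : ∫ z, L.precompL E (fderiv ℝ k z) c = 0 :=
  (hkc.hasFDerivAt_convolution_left L hk (locallyIntegrable_const c) (μ := volume) 0).unique
    (hasFDerivAt_const _ _)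

theorem norm_scaledConvolution_sub_le (hδ : 0 < δ) (hk : Continuous k)
    (hks : tsupport k ⊆ ball 0 1) (hf : Continuous f) {x : E} {c : F} {w : ℝ}
    (hosc : ∀ y, ‖y - x‖ < δ → ‖f y - c‖ ≤ w) :
    ‖scaledConvolution L k δ f x - ∫ z, L (k z) c‖ ≤ ‖L‖ * (∫ z, ‖k z‖) * w := by
  have hkc := hasCompactSupport_of_tsupport_subset_ball hks
  rw [← dist_eq_norm]
  refine dist_convolution_le' L ((norm_nonneg _).trans (hosc x (by simpa using hδ)))
    (hk.integrable_of_hasCompactSupport hkc) ((subset_tsupport k).trans hks)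
    (hf.comp (continuous_const_smul δ)).aestronglyMeasurable fun z hz => ?_
  have hzx : δ • z - x = δ • (z - δ⁻¹ • x) := by rw [smul_sub, smul_inv_smul₀ hδ.ne']
  rw [dist_eq_norm]
  refine hosc _ ?_
  rw [hzx, norm_smul, Real.norm_of_nonneg hδ.le]
  exact mul_lt_of_lt_one_right hδ (mem_ball_iff_norm.1 hz)

theorem norm_fderiv_scaledConvolution_le (hδ : 0 < δ) (hk : ContDiff ℝ 1 k)
    (hks : tsupport k ⊆ ball 0 1) (hf : Continuous f) {x : E} {c : F} {w : ℝ}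
    (hosc : ∀ y, ‖y - x‖ < δ → ‖f y - c‖ ≤ w) :
    ‖fderiv ℝ (scaledConvolution L k δ f) x‖ ≤ δ⁻¹ * (‖L‖ * (∫ z, ‖fderiv ℝ k z‖) * w) := by
  have hw : 0 ≤ w := (norm_nonneg _).trans (hosc x (by simpa using hδ))
  have hkc := hasCompactSupport_of_tsupport_subset_ball hks
  have h := norm_scaledConvolution_sub_le (L.precompL E) hδ (hk.continuous_fderiv one_ne_zero)
    ((tsupport_fderiv_subset ℝ).trans hks) hf hosc
  rw [integral_precompL_fderiv_eq_zero L hk hkc, sub_zero] at h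
  rw [(hasFDerivAt_scaledConvolution L hk hkc hf x).fderiv, norm_smul, norm_inv,
    Real.norm_of_nonneg hδ.le]
  gcongr
  exact h.trans (by gcongr; exact L.norm_precompL_le E)

theorem norm_scaledConvolution_sub_scaledConvolution_le (hδ : 0 < δ) (hk : ContDiff ℝ 1 k)
    (hks : tsupport k ⊆ ball 0 1) (hf : Continuous f) {m : ℝ} (hm : ∀ y, ‖f y‖ ≤ m) (x y : E) :
    ‖scaledConvolution L k δ f x - scaledConvolution L k δ f y‖ ≤
      δ⁻¹ * (‖L‖ * (∫ z, ‖fderiv ℝ k z‖) * m) * ‖x - y‖ :=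
  convex_univ.norm_image_sub_le_of_norm_fderiv_le (𝕜 := ℝ)
    (fun z _ => (hasFDerivAt_scaledConvolution L hk
      (hasCompactSupport_of_tsupport_subset_ball hks) hf z).differentiableAt)
    (fun z _ => norm_fderiv_scaledConvolution_le L hδ hk hks hf (c := 0)
      fun y _ => by simpa using hm y) (mem_univ y) (mem_univ x)

theorem norm_fderiv_scaledConvolution_sub_le (hδ : 0 < δ) (hk : ContDiff ℝ 2 k)
    (hks : tsupport k ⊆ ball 0 1) (hf : Continuous f) {m : ℝ} (hm : ∀ y, ‖f y‖ ≤ m) (x y : E) :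
    ‖fderiv ℝ (scaledConvolution L k δ f) x - fderiv ℝ (scaledConvolution L k δ f) y‖ ≤
      δ⁻¹ * (δ⁻¹ * (‖L‖ * (∫ z, ‖fderiv ℝ (fderiv ℝ k) z‖) * m) * ‖x - y‖) := by
  have hm0 : 0 ≤ m := (norm_nonneg _).trans (hm x)
  have hderiv (z : E) := (hasFDerivAt_scaledConvolution (δ := δ) L (hk.of_le one_le_two)
    (hasCompactSupport_of_tsupport_subset_ball hks) hf z).fderiv
  have h := norm_scaledConvolution_sub_scaledConvolution_le (L.precompL E) hδ
    (hk.fderiv_right le_rfl) ((tsupport_fderiv_subset ℝ).trans hks) hf hm x y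
  rw [hderiv, hderiv, ← smul_sub, norm_smul, norm_inv, Real.norm_of_nonneg hδ.le]
  gcongr
  exact h.trans (by gcongr; exact L.norm_precompL_le E)

end ScaledConvolution

section Mollification

variable {E F : Type*} [NormedAddCommGroup E] [InnerProductSpace ℝ E] [FiniteDimensional ℝ E]
  [MeasurableSpace E] [BorelSpace E] [NormedAddCommGroup F] [NormedSpace ℝ F]
  {δ : ℝ} {f : E → F}

variable (E) in
/-- The bump function underlying the mollification kernel. Its closed support lies in the open unit
ball, so that the derivatives of the kernel are supported there as well. -/
def mollBump : ContDiffBump (0 : E) := ⟨1 / 4, 1 / 2, by norm_num, by norm_num⟩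

variable (E) in
/-- The mollification kernel at unit scale, a smooth probability density. -/
def mollKernel : E → ℝ := (mollBump E).normed volume

/-- The mollification of `f` at scale `δ`. -/
def mollify (δ : ℝ) (f : E → F) : E → F :=
  scaledConvolution (ContinuousLinearMap.lsmul ℝ ℝ) (mollKernel E) δ f

variable (E) in
/-- The `L¹` norm of the first derivative of the mollification kernel, increased by one so that it
is positive even on the trivial space. -/
def mollConst : ℝ := (∫ z, ‖fderiv ℝ (mollKernel E) z‖) + 1

variable (E) in
/-- The `L¹` norm of the second derivative of the mollification kernel. -/
def mollConst₂ : ℝ := ∫ z, ‖fderiv ℝ (fderiv ℝ (mollKernel E)) z‖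

theorem mollConst_pos : 0 < mollConst E := by unfold mollConst; positivity

theorem mollConst₂_nonneg : 0 ≤ mollConst₂ E := by unfold mollConst₂; positivity

theorem contDiff_mollKernel {n : ℕ∞} : ContDiff ℝ n (mollKernel E) :=
  (mollBump E).contDiff_normed

theorem tsupport_mollKernel_subset : tsupport (mollKernel E) ⊆ ball 0 1 := by
  rw [mollKernel, ContDiffBump.tsupport_normed_eq]
  exact closedBall_subset_ball (by norm_num [mollBump])

theorem contDiff_mollify [CompleteSpace F] (δ : ℝ) (hf : Continuous f) :
    ContDiff ℝ ∞ (mollify δ f) :=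
  contDiff_scaledConvolution _ contDiff_mollKernel
    (hasCompactSupport_of_tsupport_subset_ball tsupport_mollKernel_subset) hf

theorem norm_mollify_sub_le [CompleteSpace F] (hδ : 0 < δ) (hf : Continuous f) {x : E} {c : F}
    {w : ℝ} (hosc : ∀ y, ‖y - x‖ < δ → ‖f y - c‖ ≤ w) : ‖mollify δ f x - c‖ ≤ w := by
  have hw : 0 ≤ w := (norm_nonneg _).trans (hosc x (by simpa using hδ))
  have h := norm_scaledConvolution_sub_le (ContinuousLinearMap.lsmul ℝ ℝ) hδ
    (contDiff_mollKernel (n := 0)).continuous tsupport_mollKernel_subset hf hosc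
  simp only [ContinuousLinearMap.lsmul_apply, integral_smul_const, mollKernel,
    ContDiffBump.integral_normed, one_smul, Real.norm_of_nonneg (ContDiffBump.nonneg_normed _ _),
    mul_one] at h
  exact h.trans (mul_le_of_le_one_left hw ContinuousLinearMap.opNorm_lsmul_le)

theorem norm_mollify_le [CompleteSpace F] (hδ : 0 < δ) (hf : Continuous f)
    {m : ℝ} (hm : ∀ y, ‖f y‖ ≤ m) (x : E) : ‖mollify δ f x‖ ≤ m := by
  simpa using norm_mollify_sub_le hδ hf (x := x) (c := 0) (w := m) fun y _ => by simpa using hm y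

theorem norm_fderiv_mollify_le (hδ : 0 < δ) (hf : Continuous f) {x : E} {c : F}
    {w : ℝ} (hosc : ∀ y, ‖y - x‖ < δ → ‖f y - c‖ ≤ w) :
    ‖fderiv ℝ (mollify δ f) x‖ ≤ mollConst E * w / δ := by
  have hw : 0 ≤ w := (norm_nonneg _).trans (hosc x (by simpa using hδ))
  calc _ ≤ _ := norm_fderiv_scaledConvolution_le (ContinuousLinearMap.lsmul ℝ ℝ) hδ
        (contDiff_mollKernel (n := 1)) tsupport_mollKernel_subset hf hosc
    _ ≤ δ⁻¹ * (1 * mollConst E * w) := by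
        gcongr
        exacts [ContinuousLinearMap.opNorm_lsmul_le, le_add_of_nonneg_right zero_le_one]
    _ = mollConst E * w / δ := by ring

theorem norm_fderiv_mollify_sub_le (hδ : 0 < δ) (hf : Continuous f) {m : ℝ}
    (hm : ∀ y, ‖f y‖ ≤ m) (x y : E) :
    ‖fderiv ℝ (mollify δ f) x - fderiv ℝ (mollify δ f) y‖ ≤
      mollConst₂ E / δ ^ 2 * m * ‖x - y‖ := by
  have hm0 : 0 ≤ m := (norm_nonneg _).trans (hm x)
  calc _ ≤ _ := norm_fderiv_scaledConvolution_sub_le (ContinuousLinearMap.lsmul ℝ ℝ) hδ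
        (contDiff_mollKernel (n := 2)) tsupport_mollKernel_subset hf hm x y
    _ ≤ δ⁻¹ * (δ⁻¹ * (1 * mollConst₂ E * m) * ‖x - y‖) := by
        gcongr
        exacts [ContinuousLinearMap.opNorm_lsmul_le, le_rfl]
    _ = mollConst₂ E / δ ^ 2 * m * ‖x - y‖ := by field_simp

end Mollification

section ContinuousMap

theorem setOf_mapsTo_eq_iUnion_iInter {α X Y : Type*} [TopologicalSpace X] [PseudoMetricSpace Y]
    {v : α → C(X, Y)} {K D : Set X} {U : Set Y} (hK : IsCompact K) (hU : IsOpen U) (hDK : D ⊆ K)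
    (hKD : K ⊆ closure D) : {a | MapsTo (v a) K U} =
      ⋃ n : ℕ, ⋂ x ∈ D, (fun a => v a x) ⁻¹' (thickening (1 / ((n : ℝ) + 1)) Uᶜ)ᶜ := by
  ext a
  simp only [mem_ofPred_eq, mem_iUnion, mem_iInter, mem_preimage]
  constructor
  · intro hKU
    obtain ⟨r, hr, hdisj⟩ := Disjoint.exists_thickenings
      (disjoint_compl_right_iff_subset.2 hKU.image_subset)
      (hK.image (v a).continuous) hU.isClosed_compl
    obtain ⟨n, hn⟩ := exists_nat_one_div_lt hr
    exact ⟨n, fun x hx hxU => hdisj.le_bot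
      ⟨self_subset_thickening hr _ (mem_image_of_mem _ (hDK hx)), thickening_mono hn.le _ hxU⟩⟩
  · rintro ⟨n, hn⟩ x hx
    have hclosed := isOpen_thickening (δ := 1 / ((n : ℝ) + 1)) (E := Uᶜ) |>.isClosed_compl.preimage
      (v a).continuous
    have hxU := closure_minimal (fun y hy => hn y hy) hclosed (hKD hx)
    by_contra hx'
    exact hxU (self_subset_thickening Nat.one_div_pos_of_nat _ hx')

theorem measurable_continuousMap_of_eval {α X Y : Type*} [MeasurableSpace α] [MetricSpace X]
    [SecondCountableTopology X] [LocallyCompactSpace X] [PseudoMetricSpace Y]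
    [SecondCountableTopology Y] [MeasurableSpace Y] [BorelSpace Y]
    [MeasurableSpace C(X, Y)] [BorelSpace C(X, Y)] {v : α → C(X, Y)}
    (hv : ∀ x, Measurable fun a => v a x) : Measurable v := by
  rw [BorelSpace.measurable_eq (α := C(X, Y)),
    borel_eq_generateFrom_of_subbasis (ContinuousMap.compactOpen_eq (X := X) (Y := Y))]
  refine measurable_generateFrom ?_
  rintro _ ⟨K, hK, U, hU, rfl⟩
  obtain ⟨D, hDK, hDc, hKD⟩ :=
    (TopologicalSpace.IsSeparable.of_separableSpace K).exists_countable_dense_subset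
  change MeasurableSet {a | MapsTo (v a) K U}
  rw [setOf_mapsTo_eq_iUnion_iInter hK hU hDK hKD]
  exact .iUnion fun n => .biInter hDc fun x _ => hv x isOpen_thickening.measurableSet.compl

theorem continuous_integral_clm_apply {X F : Type*} [TopologicalSpace X] [LocallyCompactSpace X]
    [SecondCountableTopology X] [MeasurableSpace X] [OpensMeasurableSpace X]
    [NormedAddCommGroup F] [NormedSpace ℝ F] {ψ : X → F →L[ℝ] ℝ} (hψ : Continuous ψ)
    (hψc : HasCompactSupport ψ) (p : Measure X) [IsFiniteMeasure p] :
    Continuous fun v : C(X, F) => ∫ x, ψ x (v x) ∂p := by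
  rw [← continuousOn_univ]
  refine continuousOn_integral_of_compact_support hψc.isCompact ?_ fun v x _ hx => ?_
  · exact (hψ.comp continuous_snd).clm_apply continuous_eval |>.continuousOn
  · rw [image_eq_zero_of_notMem_tsupport hx, zero_apply]

end ContinuousMap

section SmoothApproximation

theorem tendsto_integral_of_tendstoUniformly {X F : Type*} [MeasurableSpace X]
    [NormedAddCommGroup F] [NormedSpace ℝ F] {p : Measure X} [IsFiniteMeasure p]
    {g : ℕ → X → F} {f : X → F} (hg : ∀ n, Integrable (g n) p) (hf : Integrable f p)
    (hgf : TendstoUniformly g f atTop) :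
    Tendsto (fun n => ∫ x, g n x ∂p) atTop (𝓝 (∫ x, f x ∂p)) := by
  rw [Metric.tendsto_atTop]
  intro ε hε
  obtain ⟨c, hc, hcε⟩ : ∃ c > 0, c * p.real univ < ε :=
    ⟨ε / (p.real univ + 1), by positivity, by field_simp; linarith⟩
  obtain ⟨N, hN⟩ := eventually_atTop.1 (Metric.tendstoUniformly_iff.1 hgf c hc)
  refine ⟨N, fun n hn => ?_⟩
  rw [dist_comm, dist_eq_norm, ← integral_sub hf (hg n)]
  refine (norm_integral_le_of_norm_le_const (Eventually.of_forall fun x => ?_)).trans_lt hcε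
  rw [← dist_eq_norm]
  exact (hN n hn x).le

variable {E : Type*} [NormedAddCommGroup E] [NormedSpace ℝ E] [FiniteDimensional ℝ E]

theorem exists_seq_contDiff_tendstoUniformly {f : E → ℝ} (hf : Continuous f)
    (hfc : HasCompactSupport f) : ∃ g : ℕ → E → ℝ,
      (∀ n, ContDiff ℝ ∞ (g n)) ∧ (∀ n, HasCompactSupport (g n)) ∧ TendstoUniformly g f atTop := by
  choose g hg hgf hgs using fun n : ℕ => hf.exists_contDiff_approx ⊤
    (continuous_const (y := 1 / ((n : ℝ) + 1))) fun _ => Nat.one_div_pos_of_nat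
  refine ⟨g, hg, fun n => hfc.mono (hgs n), Metric.tendstoUniformly_iff.2 fun ε hε => ?_⟩
  filter_upwards [tendsto_one_div_add_atTop_nhds_zero_nat.eventually_lt_const hε] with n hn x
  rw [dist_comm]
  exact (hgf n x).trans hn

theorem ext_of_forall_integral_contDiff_eq [MeasurableSpace E] [BorelSpace E] {p q : Measure E}
    [IsFiniteMeasure p] [IsFiniteMeasure q]
    (h : ∀ u : E → ℝ, ContDiff ℝ ∞ u → HasCompactSupport u → ∫ x, u x ∂p = ∫ x, u x ∂q) :
    p = q := by
  refine Measure.ext_of_integral_eq_on_compactlySupported fun f => ?_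
  obtain ⟨g, hg, hgc, hgf⟩ := exists_seq_contDiff_tendstoUniformly f.continuous f.hasCompactSupport
  have hlim (r : Measure E) [IsFiniteMeasure r] :
      Tendsto (fun n => ∫ x, g n x ∂r) atTop (𝓝 (∫ x, f x ∂r)) :=
    tendsto_integral_of_tendstoUniformly
      (fun n => (hg n).continuous.integrable_of_hasCompactSupport (hgc n))
      (f.continuous.integrable_of_hasCompactSupport f.hasCompactSupport) hgf
  exact tendsto_nhds_unique (hlim p) (by simpa only [h _ (hg _) (hgc _)] using hlim q)

end SmoothApproximation

section SignedIntegral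

variable {d : ℕ}

local notation "𝔼" => EuclideanSpace ℝ (Fin d)

theorem sInt_sub (μ : SignedMeasure 𝔼) {f g : 𝔼 → ℝ} (hf : Integrable f μ.totalVariation)
    (hg : Integrable g μ.totalVariation) :
    sInt μ (fun x => f x - g x) = sInt μ f - sInt μ g := by
  rw [sInt, integral_sub hf.left_of_add_measure hg.left_of_add_measure,
    integral_sub hf.right_of_add_measure hg.right_of_add_measure, sInt, sInt]
  ring

theorem abs_sInt_le (μ : SignedMeasure 𝔼) {f : 𝔼 → ℝ} {c : ℝ} (hf : ∀ x, |f x| ≤ c) :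
    |sInt μ f| ≤ μ.totalVariation.real univ * c := by
  have hint (p : Measure 𝔼) [IsFiniteMeasure p] : |∫ x, f x ∂p| ≤ c * p.real univ :=
    norm_integral_le_of_norm_le_const (f := f) (Eventually.of_forall hf)
  rw [SignedMeasure.totalVariation, measureReal_add_apply, sInt, add_mul, mul_comm _ c,
    mul_comm _ c]
  exact (abs_sub _ _).trans (add_le_add (hint _) (hint _))

theorem tendsto_sInt_of_tendstoUniformly (μ : SignedMeasure 𝔼) {g : ℕ → 𝔼 → ℝ} {f : 𝔼 → ℝ}
    (hg : ∀ n, Integrable (g n) μ.totalVariation) (hf : Integrable f μ.totalVariation)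
    (hgf : TendstoUniformly g f atTop) :
    Tendsto (fun n => sInt μ (g n)) atTop (𝓝 (sInt μ f)) :=
  (tendsto_integral_of_tendstoUniformly (fun n => (hg n).left_of_add_measure)
    hf.left_of_add_measure hgf).sub
    (tendsto_integral_of_tendstoUniformly (fun n => (hg n).right_of_add_measure)
      hf.right_of_add_measure hgf)

theorem toJordanDecomposition_toSignedMeasure_measure (p : Measure 𝔼) [IsFiniteMeasure p] :
    p.toSignedMeasure.toJordanDecomposition = ⟨p, 0, Measure.MutuallySingular.zero_right⟩ :=
  SignedMeasure.toJordanDecomposition_eq <| by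
    simp [JordanDecomposition.toSignedMeasure]

theorem sInt_toSignedMeasure (p : Measure 𝔼) [IsFiniteMeasure p] (f : 𝔼 → ℝ) :
    sInt p.toSignedMeasure f = ∫ x, f x ∂p := by
  simp [sInt, toJordanDecomposition_toSignedMeasure_measure]

theorem totalVariation_toSignedMeasure (p : Measure 𝔼) [IsFiniteMeasure p] :
    p.toSignedMeasure.totalVariation = p := by
  simp [SignedMeasure.totalVariation, toJordanDecomposition_toSignedMeasure_measure]

theorem eq_map_of_forall_sInt_eq {μ ν : SignedMeasure 𝔼} {Y : 𝔼 → 𝔼}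
    (hY : Measurable Y) (h : ∀ u : 𝔼 → ℝ, ContDiff ℝ ∞ u → HasCompactSupport u →
      sInt μ u = sInt ν (fun x => u (Y x))) : μ = ν.map Y := by
  have hparts : μ.toJordanDecomposition.posPart + ν.toJordanDecomposition.negPart.map Y =
      μ.toJordanDecomposition.negPart + ν.toJordanDecomposition.posPart.map Y := by
    refine ext_of_forall_integral_contDiff_eq fun u hu huc => ?_
    have hint (r : Measure 𝔼) [IsFiniteMeasure r] : Integrable u r :=
      hu.continuous.integrable_of_hasCompactSupport huc
    have hsInt := h u hu huc
    rw [sInt, sInt, ← integral_map hY.aemeasurable hu.continuous.aestronglyMeasurable,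
      ← integral_map hY.aemeasurable hu.continuous.aestronglyMeasurable] at hsInt
    rw [integral_add_measure (hint _) (hint _), integral_add_measure (hint _) (hint _)]
    linarith
  ext A hA
  have hpartsA := congrArg (Measure.real · A) hparts
  rw [measureReal_add_apply, measureReal_add_apply, map_measureReal_apply hY hA,
    map_measureReal_apply hY hA] at hpartsA
  rw [VectorMeasure.map_apply _ hY hA, SignedMeasure.apply_eq_posPart_real_sub_negPart_real _ hA,
    SignedMeasure.apply_eq_posPart_real_sub_negPart_real _ (hY hA)]
  linarith

variable {α : Type*} [MeasurableSpace α] {μ : α → SignedMeasure (EuclideanSpace ℝ (Fin d))}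

theorem measurable_sInt_of_hasCompactSupport
    (hμ : ∀ u : 𝔼 → ℝ, ContDiff ℝ ∞ u → HasCompactSupport u → Measurable fun a => sInt (μ a) u)
    {f : 𝔼 → ℝ} (hf : Continuous f) (hfc : HasCompactSupport f) :
    Measurable fun a => sInt (μ a) f := by
  obtain ⟨g, hg, hgc, hgf⟩ := exists_seq_contDiff_tendstoUniformly hf hfc
  refine measurable_of_tendsto_metrizable (fun n => hμ (g n) (hg n) (hgc n))
    (tendsto_pi_nhds.2 fun a => ?_)
  have hint {u : 𝔼 → ℝ} (hu : Continuous u) (huc : HasCompactSupport u) :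
      Integrable u (μ a).totalVariation := hu.integrable_of_hasCompactSupport huc
  exact tendsto_sInt_of_tendstoUniformly (μ a) (fun n => hint (hg n).continuous (hgc n))
    (hint hf hfc) hgf

theorem measurable_sInt_clm_apply
    (hμ : ∀ u : 𝔼 → ℝ, ContDiff ℝ ∞ u → HasCompactSupport u → Measurable fun a => sInt (μ a) u)
    {ψ : 𝔼 → 𝔼 →L[ℝ] ℝ} (hψ : Continuous ψ) (hψc : HasCompactSupport ψ) {V : α → 𝔼 → 𝔼}
    (hVm : ∀ x, Measurable fun a => V a x) (hVc : ∀ a, Continuous (V a)) :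
    Measurable fun a => sInt (μ a) fun x => ψ x (V a x) := by
  borelize C(𝔼, 𝔼)
  have hcont (a : α) : Continuous fun w : C(𝔼, 𝔼) => sInt (μ a) fun x => ψ x (w x) :=
    (continuous_integral_clm_apply hψ hψc (μ a).toJordanDecomposition.posPart).sub
      (continuous_integral_clm_apply hψ hψc (μ a).toJordanDecomposition.negPart)
  have hmeas (w : C(𝔼, 𝔼)) : Measurable fun a => sInt (μ a) fun x => ψ x (w x) :=
    measurable_sInt_of_hasCompactSupport hμ (hψ.clm_apply w.continuous)
      (hψc.mono fun x hx h => hx (by simp [h]))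
  have hV : Measurable fun a => (⟨V a, hVc a⟩ : C(𝔼, 𝔼)) := measurable_continuousMap_of_eval hVm
  simpa only [Function.comp_def, Function.uncurry_apply_pair, ContinuousMap.coe_mk, id] using
    (measurable_uncurry_of_continuous_of_measurable hcont hmeas).comp (hV.prodMk measurable_id)

end SignedIntegral

section TestFunctions

theorem hasCompactSupport_comp_id_add {E : Type*} [NormedAddCommGroup E] [ProperSpace E]
    {φ : E → ℝ} {W : E → E} {m : ℝ} (hφ : HasCompactSupport φ) (hm : ∀ x, ‖W x‖ ≤ m) :
    HasCompactSupport fun x => φ (x + W x) := by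
  refine .of_support_subset_isCompact (hφ.isCompact.cthickening (r := m)) fun x hx => ?_
  refine mem_cthickening_of_dist_le x (x + W x) m _ (subset_tsupport φ hx) ?_
  simpa using hm x

theorem norm_comp_sub_comp_le {E F G : Type*} [NormedAddCommGroup E] [NormedSpace ℝ E]
    [NormedAddCommGroup F] [NormedSpace ℝ F] [NormedAddCommGroup G] [NormedSpace ℝ G]
    (p q : F →L[ℝ] G) (u v : E →L[ℝ] F) :
    ‖p.comp u - q.comp v‖ ≤ ‖p - q‖ * ‖u‖ + ‖q‖ * ‖u - v‖ := by
  calc ‖p.comp u - q.comp v‖ = ‖(p - q).comp u + q.comp (u - v)‖ := by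
        rw [ContinuousLinearMap.sub_comp, ContinuousLinearMap.comp_sub, sub_add_sub_cancel]
    _ ≤ ‖p - q‖ * ‖u‖ + ‖q‖ * ‖u - v‖ := norm_add_le_of_le
        (ContinuousLinearMap.opNorm_comp_le _ _) (ContinuousLinearMap.opNorm_comp_le _ _)

variable {E : Type*} [NormedAddCommGroup E] [NormedSpace ℝ E]

/-- A smooth compactly supported function whose derivative is bounded by `L` and is
`B`-Lipschitz: these two constants are all that the error estimates see of a test function. -/
structure TestBound (φ : E → ℝ) (L B : ℝ) : Prop where
  contDiff : ContDiff ℝ ∞ φ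
  hasCompactSupport : HasCompactSupport φ
  norm_fderiv_le : ∀ x, ‖fderiv ℝ φ x‖ ≤ L
  norm_fderiv_sub_le : ∀ x y, ‖fderiv ℝ φ x - fderiv ℝ φ y‖ ≤ B * ‖x - y‖
  snd_nonneg : 0 ≤ B

variable {φ : E → ℝ} {L B : ℝ}

theorem exists_testBound (hφ : ContDiff ℝ ∞ φ) (hφc : HasCompactSupport φ) :
    ∃ L B, TestBound φ L B := by
  obtain ⟨L, hL⟩ := (hφc.fderiv ℝ).exists_bound_of_continuous (hφ.continuous_fderiv (by simp))
  obtain ⟨B, hB⟩ := (hφ.fderiv_right (m := 1) (by norm_cast)).lipschitzWith_of_hasCompactSupport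
    (hφc.fderiv ℝ) (by simp)
  exact ⟨L, B, hφ, hφc, hL, fun x y => by simpa only [dist_eq_norm] using hB.dist_le_mul x y,
    B.coe_nonneg⟩

namespace TestBound

theorem fst_nonneg (h : TestBound φ L B) : 0 ≤ L :=
  (norm_nonneg _).trans (h.norm_fderiv_le 0)

theorem mono (h : TestBound φ L B) {L' B' : ℝ} (hL : L ≤ L') (hB : B ≤ B') :
    TestBound φ L' B' :=
  ⟨h.contDiff, h.hasCompactSupport, fun x => (h.norm_fderiv_le x).trans hL,
    fun x y => (h.norm_fderiv_sub_le x y).trans (by gcongr), h.snd_nonneg.trans hB⟩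

theorem differentiable (h : TestBound φ L B) : Differentiable ℝ φ :=
  h.contDiff.differentiable (by simp)

theorem contDiff_fderiv (h : TestBound φ L B) : ContDiff ℝ ∞ (fderiv ℝ φ) :=
  h.contDiff.fderiv_right (by simp)

theorem abs_fderiv_apply_le (h : TestBound φ L B) {x v : E} {c : ℝ} (hv : ‖v‖ ≤ c) :
    |fderiv ℝ φ x v| ≤ L * c :=
  (fderiv ℝ φ x).le_of_opNorm_le_of_le (h.norm_fderiv_le x) hv

theorem abs_sub_le (h : TestBound φ L B) (x y : E) : |φ x - φ y| ≤ L * ‖x - y‖ :=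
  convex_univ.norm_image_sub_le_of_norm_fderiv_le (fun z _ => h.differentiable z)
    (fun z _ => h.norm_fderiv_le z) (mem_univ y) (mem_univ x)

theorem abs_add_sub_sub_le (h : TestBound φ L B) {x w : E} {r : ℝ} (hw : ‖w‖ ≤ r) :
    |φ (x + w) - φ x - fderiv ℝ φ x w| ≤ B * r ^ 2 := by
  have hr : 0 ≤ r := (norm_nonneg w).trans hw
  have hB := h.snd_nonneg
  have hmean := (convex_closedBall x r).norm_image_sub_le_of_norm_fderiv_le' (f := φ)
    (φ := fderiv ℝ φ x) (C := B * r) (x := x) (y := x + w) (fun z _ => h.differentiable z)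
    (fun z hz => (h.norm_fderiv_sub_le z x).trans
      (mul_le_mul_of_nonneg_left (mem_closedBall_iff_norm.1 hz) hB))
    (mem_closedBall_self hr) (by simpa [mem_closedBall] using hw)
  rw [add_sub_cancel_left] at hmean
  calc |φ (x + w) - φ x - fderiv ℝ φ x w| ≤ B * r * ‖w‖ := hmean
    _ ≤ B * r * r := by gcongr
    _ = B * r ^ 2 := by ring

theorem norm_fderiv_fderiv_apply_le (h : TestBound φ L B) {Q : E → E} (hQ : Differentiable ℝ Q)
    {m α : ℝ} (hm : ∀ x, ‖Q x‖ ≤ m) (hα : ∀ x, ‖fderiv ℝ Q x‖ ≤ α) (x : E) :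
    ‖fderiv ℝ (fun x => fderiv ℝ φ x (Q x)) x‖ ≤ L * α + B * m := by
  have hα0 := (norm_nonneg _).trans (hα x)
  have hm0 := (norm_nonneg _).trans (hm x)
  have hL := h.fst_nonneg
  have hB := h.snd_nonneg
  have hQlip (y z : E) : ‖Q y - Q z‖ ≤ α * ‖y - z‖ :=
    convex_univ.norm_image_sub_le_of_norm_fderiv_le (fun z _ => hQ z) (fun z _ => hα z)
      (mem_univ z) (mem_univ y)
  refine norm_fderiv_le_of_lip' ℝ (by positivity) (Eventually.of_forall fun y => ?_)
  calc ‖fderiv ℝ φ y (Q y) - fderiv ℝ φ x (Q x)‖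
      = ‖fderiv ℝ φ y (Q y - Q x) + (fderiv ℝ φ y - fderiv ℝ φ x) (Q x)‖ := by
        rw [map_sub, sub_apply, sub_add_sub_cancel]
    _ ≤ L * (α * ‖y - x‖) + B * ‖y - x‖ * m := norm_add_le_of_le
        (h.abs_fderiv_apply_le (hQlip y x))
        (ContinuousLinearMap.le_of_opNorm_le_of_le _ (h.norm_fderiv_sub_le y x) (hm x))
    _ = (L * α + B * m) * ‖y - x‖ := by ring

end TestBound

theorem TestBound.comp_id_add [ProperSpace E] (h : TestBound φ L B) {W : E → E}
    (hW : ContDiff ℝ ∞ W) {m α β : ℝ} (hm : ∀ x, ‖W x‖ ≤ m) (hα : ∀ x, ‖fderiv ℝ W x‖ ≤ α)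
    (hβ : ∀ x y, ‖fderiv ℝ W x - fderiv ℝ W y‖ ≤ β * ‖x - y‖) (hβ0 : 0 ≤ β) :
    TestBound (fun x => φ (x + W x)) (L * (1 + α)) (B * (1 + α) ^ 2 + L * β) := by
  have hα0 : 0 ≤ α := (norm_nonneg _).trans (hα 0)
  have hL := h.fst_nonneg
  have hB := h.snd_nonneg
  set D : E → E →L[ℝ] E := fun x => .id ℝ E + fderiv ℝ W x
  have hD (x : E) : HasFDerivAt (fun x => x + W x) (D x) x :=
    (hasFDerivAt_id x).add (hW.differentiable (by simp) x).hasFDerivAt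
  have hDle (x : E) : ‖D x‖ ≤ 1 + α := norm_add_le_of_le ContinuousLinearMap.norm_id_le (hα x)
  have hDlip (x y : E) : ‖D x - D y‖ ≤ β * ‖x - y‖ := by
    simpa only [D, add_sub_add_left_eq_sub] using hβ x y
  have hlip (x y : E) : ‖(x + W x) - (y + W y)‖ ≤ (1 + α) * ‖x - y‖ :=
    convex_univ.norm_image_sub_le_of_norm_hasFDerivWithin_le
      (fun z _ => (hD z).hasFDerivWithinAt) (fun z _ => hDle z) (mem_univ y) (mem_univ x)
  have hfderiv (x : E) :
      fderiv ℝ (fun x => φ (x + W x)) x = (fderiv ℝ φ (x + W x)).comp (D x) :=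
    ((h.differentiable (x + W x)).hasFDerivAt.comp x (hD x)).fderiv
  refine ⟨h.contDiff.comp (contDiff_id.add hW),
    hasCompactSupport_comp_id_add h.hasCompactSupport hm, fun x => ?_, fun x y => ?_, by positivity⟩
  · rw [hfderiv]
    exact (ContinuousLinearMap.opNorm_comp_le _ _).trans
      (mul_le_mul (h.norm_fderiv_le _) (hDle x) (norm_nonneg _) hL)
  · rw [hfderiv, hfderiv]
    refine (norm_comp_sub_comp_le _ _ _ _).trans ?_
    calc _ ≤ B * ((1 + α) * ‖x - y‖) * (1 + α) + L * (β * ‖x - y‖) := by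
          gcongr
          · exact (h.norm_fderiv_sub_le _ _).trans (by gcongr; exact hlip x y)
          · exact hDle x
          · exact h.norm_fderiv_le _
          · exact hDlip x y
      _ = (B * (1 + α) ^ 2 + L * β) * ‖x - y‖ := by ring

end TestFunctions

section ControlledField

/-- A velocity field which, on `[0, T]`, is bounded by an integrable function `A` of time and has,
at distances below one, the modulus of continuity `A t * ρ`. -/
structure IsControlled {E : Type*} [NormedAddCommGroup E] [MeasurableSpace E] (T : ℝ)
    (V : ℝ → E → E) (A ρ : ℝ → ℝ) : Prop where
  measurable : Measurable (Function.uncurry V)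
  continuous : ∀ t, Continuous (V t)
  nonneg : ∀ t, 0 ≤ A t
  integrableOn : IntegrableOn A (Icc 0 T)
  norm_le : ∀ᵐ t ∂volume.restrict (Icc 0 T), ∀ x, ‖V t x‖ ≤ A t
  modulus_mono : MonotoneOn ρ (Ico 0 1)
  modulus_nonneg : ∀ r, 0 ≤ ρ r
  norm_sub_le : ∀ᵐ t ∂volume.restrict (Icc 0 T), ∀ x y, ‖x - y‖ < 1 →
    ‖V t x - V t y‖ ≤ A t * ρ ‖x - y‖

/-- The displacement between the times `s` and `t` of a particle which constantly feels the velocity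
field at `x`. -/
def drift {E : Type*} [NormedAddCommGroup E] [NormedSpace ℝ E] (V : ℝ → E → E) (s t : ℝ) (x : E) :
    E :=
  ∫ σ in s..t, V σ x

variable {E : Type*} [NormedAddCommGroup E] [MeasurableSpace E] {T : ℝ} {V : ℝ → E → E}
  {A ρ : ℝ → ℝ} {s t δ : ℝ}

namespace IsControlled

theorem intervalIntegrable (h : IsControlled T V A ρ) (hs : s ∈ Icc 0 T) (ht : t ∈ Icc 0 T) :
    IntervalIntegrable A volume s t :=
  (h.integrableOn.mono_set (uIcc_subset_Icc hs ht)).intervalIntegrable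

theorem integral_nonneg (h : IsControlled T V A ρ) (hst : s ≤ t) : 0 ≤ ∫ σ in s..t, A σ :=
  intervalIntegral.integral_nonneg hst fun σ _ => h.nonneg σ

theorem ae_norm_le (h : IsControlled T V A ρ) (hs : s ∈ Icc 0 T) (ht : t ∈ Icc 0 T) :
    ∀ᵐ σ ∂volume.restrict (Ioc s t), ∀ x, ‖V σ x‖ ≤ A σ :=
  ae_restrict_of_ae_restrict_of_subset (Ioc_subset_Icc_self.trans (Icc_subset_Icc hs.1 ht.2))
    h.norm_le

theorem ae_norm_sub_le (h : IsControlled T V A ρ) (hs : s ∈ Icc 0 T) (ht : t ∈ Icc 0 T)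
    (hδ : δ < 1) : ∀ᵐ σ ∂volume.restrict (Ioc s t), ∀ x y, ‖x - y‖ ≤ δ →
      ‖V σ x - V σ y‖ ≤ A σ * ρ δ := by
  filter_upwards [ae_restrict_of_ae_restrict_of_subset
    (Ioc_subset_Icc_self.trans (Icc_subset_Icc hs.1 ht.2)) h.norm_sub_le] with σ hσ x y hxy
  refine (hσ x y (hxy.trans_lt hδ)).trans (mul_le_mul_of_nonneg_left ?_ (h.nonneg σ))
  exact h.modulus_mono ⟨norm_nonneg _, hxy.trans_lt hδ⟩ ⟨(norm_nonneg _).trans hxy, hδ⟩ hxy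

theorem norm_drift_le [NormedSpace ℝ E] (h : IsControlled T V A ρ) (hst : s ≤ t) (hs : s ∈ Icc 0 T)
    (ht : t ∈ Icc 0 T) (x : E) : ‖drift V s t x‖ ≤ ∫ σ in s..t, A σ :=
  intervalIntegral.norm_integral_le_of_norm_le hst
    ((ae_restrict_iff' measurableSet_Ioc).1 ((h.ae_norm_le hs ht).mono fun _ hσ => hσ x))
    (h.intervalIntegrable hs ht)

variable [BorelSpace E] [SecondCountableTopology E]

theorem intervalIntegrable_comp (h : IsControlled T V A ρ) (hst : s ≤ t) (hs : s ∈ Icc 0 T)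
    (ht : t ∈ Icc 0 T) {c : ℝ → E} (hc : Measurable c) :
    IntervalIntegrable (fun σ => V σ (c σ)) volume s t := by
  refine (h.intervalIntegrable hs ht).mono_fun'
    (h.measurable.comp (measurable_id.prodMk hc)).aestronglyMeasurable ?_
  rw [uIoc_of_le hst]
  exact (h.ae_norm_le hs ht).mono fun σ hσ => hσ (c σ)

variable [NormedSpace ℝ E]

theorem continuous_drift (h : IsControlled T V A ρ) (hst : s ≤ t) (hs : s ∈ Icc 0 T)
    (ht : t ∈ Icc 0 T) : Continuous (drift V s t) := by
  refine intervalIntegral.continuous_of_dominated_interval (bound := A)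
    (fun x => h.measurable.of_uncurry_right.aestronglyMeasurable) (fun x => ?_)
    (h.intervalIntegrable hs ht) (Eventually.of_forall fun σ _ => h.continuous σ)
  rw [uIoc_of_le hst, ← ae_restrict_iff' measurableSet_Ioc]
  exact (h.ae_norm_le hs ht).mono fun σ hσ => hσ x

theorem norm_drift_sub_le (h : IsControlled T V A ρ) (hst : s ≤ t) (hs : s ∈ Icc 0 T)
    (ht : t ∈ Icc 0 T) (hδ : δ < 1) {x y : E} (hxy : ‖y - x‖ ≤ δ) :
    ‖drift V s t y - drift V s t x‖ ≤ ρ δ * ∫ σ in s..t, A σ := by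
  have hint (z : E) : IntervalIntegrable (fun σ => V σ z) volume s t :=
    h.intervalIntegrable_comp hst hs ht measurable_const
  rw [drift, drift, ← intervalIntegral.integral_sub (hint y) (hint x), mul_comm,
    ← intervalIntegral.integral_mul_const]
  exact intervalIntegral.norm_integral_le_of_norm_le hst
    ((ae_restrict_iff' measurableSet_Ioc).1
      ((h.ae_norm_sub_le hs ht hδ).mono fun σ hσ => hσ y x hxy))
    ((h.intervalIntegrable hs ht).mul_const _)

theorem integrable_prod_clm_apply (h : IsControlled T V A ρ) {φ : E → ℝ} {L B : ℝ}
    (hφ : TestBound φ L B) (hs : s ∈ Icc 0 T) (ht : t ∈ Icc 0 T) (p : Measure E)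
    [IsFiniteMeasure p] :
    Integrable (Function.uncurry fun (σ : ℝ) (x : E) => fderiv ℝ φ x (V σ x))
      ((volume.restrict (Ioc s t)).prod p) := by
  have hA : Integrable A (volume.restrict (Ioc s t)) := (h.intervalIntegrable hs ht).1
  refine ((hA.comp_fst p).const_mul L).mono' ?_ ?_
  · exact (ContinuousLinearMap.measurable_apply₂ (𝕜 := ℝ).comp
      ((hφ.contDiff_fderiv.continuous.measurable.comp measurable_snd).prodMk
        h.measurable)).aestronglyMeasurable
  · filter_upwards [Measure.quasiMeasurePreserving_fst.ae (h.ae_norm_le hs ht)] with q hq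
    exact hφ.abs_fderiv_apply_le (hq _)

theorem intervalIntegrable_integral_fderiv_apply (h : IsControlled T V A ρ) {φ : E → ℝ} {L B : ℝ}
    (hφ : TestBound φ L B) (hst : s ≤ t) (hs : s ∈ Icc 0 T) (ht : t ∈ Icc 0 T) (p : Measure E)
    [IsFiniteMeasure p] :
    IntervalIntegrable (fun σ => ∫ x, fderiv ℝ φ x (V σ x) ∂p) volume s t :=
  (intervalIntegrable_iff_integrableOn_Ioc_of_le hst).2
    (h.integrable_prod_clm_apply hφ hs ht p).integral_prod_left

theorem integral_integral_fderiv_apply [CompleteSpace E] (h : IsControlled T V A ρ) {φ : E → ℝ}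
    {L B : ℝ} (hφ : TestBound φ L B) (hst : s ≤ t) (hs : s ∈ Icc 0 T) (ht : t ∈ Icc 0 T)
    (p : Measure E) [IsFiniteMeasure p] :
    ∫ σ in s..t, ∫ x, fderiv ℝ φ x (V σ x) ∂p = ∫ x, fderiv ℝ φ x (drift V s t x) ∂p := by
  rw [intervalIntegral.integral_of_le hst,
    integral_integral_swap (h.integrable_prod_clm_apply hφ hs ht p)]
  refine integral_congr_ae (Eventually.of_forall fun x => ?_)
  beta_reduce
  rw [← intervalIntegral.integral_of_le hst, drift,
    ContinuousLinearMap.intervalIntegral_comp_comm _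
      (h.intervalIntegrable_comp hst hs ht measurable_const)]

end IsControlled

end ControlledField

section EulerStep

variable {E : Type*} [NormedAddCommGroup E] [InnerProductSpace ℝ E] [FiniteDimensional ℝ E]
  [MeasurableSpace E] [BorelSpace E]

/-- The Lipschitz constant of `mollify δ (V t)` in units of `A t`, when `V t` has the modulus of
continuity `A t * ρ`. -/
def mollRate (E : Type*) [NormedAddCommGroup E] [InnerProductSpace ℝ E] [FiniteDimensional ℝ E]
    [MeasurableSpace E] [BorelSpace E] (ρ : ℝ → ℝ) (δ : ℝ) : ℝ :=
  mollConst E * ρ δ / δ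

variable {T : ℝ} {V : ℝ → E → E} {A ρ : ℝ → ℝ} {s t δ : ℝ} {φ : E → ℝ} {L B : ℝ}

theorem mollRate_nonneg (hδ : 0 ≤ δ) (hρ : 0 ≤ ρ δ) : 0 ≤ mollRate E ρ δ := by
  have := mollConst_pos (E := E)
  rw [mollRate]
  positivity

namespace TestBound

theorem comp_mollify_drift (hφ : TestBound φ L B) (h : IsControlled T V A ρ) (hst : s ≤ t)
    (hs : s ∈ Icc 0 T) (ht : t ∈ Icc 0 T) (hδ : 0 < δ) (hδ1 : δ < 1) :
    TestBound (fun x => φ (x + mollify δ (drift V s t) x))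
      (L * (1 + mollRate E ρ δ * ∫ σ in s..t, A σ))
      (B * (1 + mollRate E ρ δ * ∫ σ in s..t, A σ) ^ 2 +
        L * (mollConst₂ E / δ ^ 2 * ∫ σ in s..t, A σ)) := by
  have hdrift := h.continuous_drift hst hs ht
  have hH := h.integral_nonneg hst
  refine hφ.comp_id_add (contDiff_mollify δ hdrift)
    (norm_mollify_le hδ hdrift (h.norm_drift_le hst hs ht)) (fun x => ?_)
    (norm_fderiv_mollify_sub_le hδ hdrift (h.norm_drift_le hst hs ht)) ?_
  · refine (norm_fderiv_mollify_le hδ hdrift fun y hy =>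
      h.norm_drift_sub_le hst hs ht hδ1 hy.le).trans_eq ?_
    rw [mollRate]
    ring
  · have := mollConst₂_nonneg (E := E)
    positivity

theorem exists_contDiff_approx_fderiv_apply (hφ : TestBound φ L B) (hδ : 0 < δ) {W : E → E}
    (hW : Continuous W) {m w : ℝ} (hm : ∀ x, ‖W x‖ ≤ m)
    (hw : ∀ x y, ‖x - y‖ ≤ δ → ‖W x - W y‖ ≤ w) :
    ∃ g : E → ℝ, ContDiff ℝ ∞ g ∧ HasCompactSupport g ∧
      (∀ x, |fderiv ℝ φ x (W x) - g x| ≤ L * w) ∧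
      ∀ x, ‖fderiv ℝ g x‖ ≤ L * (mollConst E * w / δ) + B * m := by
  have hsmooth : ContDiff ℝ ∞ (mollify δ W) := contDiff_mollify δ hW
  refine ⟨fun x => fderiv ℝ φ x (mollify δ W x), hφ.contDiff_fderiv.clm_apply hsmooth,
    (hφ.hasCompactSupport.fderiv ℝ).mono fun x hx h => hx (by simp [h]), fun x => ?_,
    hφ.norm_fderiv_fderiv_apply_le (hsmooth.differentiable (by simp)) (norm_mollify_le hδ hW hm)
      fun x => norm_fderiv_mollify_le hδ hW fun y hy => hw y x hy.le⟩
  rw [← map_sub]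
  refine hφ.abs_fderiv_apply_le ?_
  rw [norm_sub_rev]
  exact norm_mollify_sub_le hδ hW fun y hy => hw y x hy.le

theorem abs_add_fderiv_drift_sub_le (hφ : TestBound φ L B) (h : IsControlled T V A ρ)
    (hst : s ≤ t) (hs : s ∈ Icc 0 T) (ht : t ∈ Icc 0 T) (hδ : 0 < δ) (hδ1 : δ < 1) (x : E) :
    |φ x + fderiv ℝ φ x (drift V s t x) - φ (x + mollify δ (drift V s t) x)| ≤
      L * (ρ δ * ∫ σ in s..t, A σ) + B * (∫ σ in s..t, A σ) ^ 2 := by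
  have hdrift := h.continuous_drift hst hs ht
  set W := mollify δ (drift V s t)
  have hlin : |fderiv ℝ φ x (W x - drift V s t x)| ≤ L * (ρ δ * ∫ σ in s..t, A σ) :=
    hφ.abs_fderiv_apply_le (norm_mollify_sub_le hδ hdrift fun y hy =>
      h.norm_drift_sub_le hst hs ht hδ1 hy.le)
  have htaylor : |φ (x + W x) - φ x - fderiv ℝ φ x (W x)| ≤ B * (∫ σ in s..t, A σ) ^ 2 :=
    hφ.abs_add_sub_sub_le (norm_mollify_le hδ hdrift (h.norm_drift_le hst hs ht) x)
  rw [abs_sub_comm]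
  calc _ = |fderiv ℝ φ x (W x - drift V s t x) + (φ (x + W x) - φ x - fderiv ℝ φ x (W x))| := by
        rw [map_sub]
        ring_nf
    _ ≤ _ := (abs_add_le _ _).trans (add_le_add hlin htaylor)

end TestBound

end EulerStep

section BoundedSolutions

theorem absolutelyContinuousOnInterval_of_dist_le_integral {X : Type*} [PseudoMetricSpace X]
    {f : ℝ → X} {A : ℝ → ℝ} {a b : ℝ} (hA : IntervalIntegrable A volume a b)
    (h : ∀ x ∈ uIcc a b, ∀ y ∈ uIcc a b, x ≤ y → dist (f x) (f y) ≤ ∫ σ in x..y, A σ) :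
    AbsolutelyContinuousOnInterval f a b := by
  have hint {x : ℝ} (hx : x ∈ uIcc a b) : IntervalIntegrable A volume a x :=
    hA.mono_set (uIcc_subset_uIcc left_mem_uIcc hx)
  have hle (x : ℝ) (hx : x ∈ uIcc a b) (y : ℝ) (hy : y ∈ uIcc a b) :
      dist (f x) (f y) ≤ dist (∫ σ in a..x, A σ) (∫ σ in a..y, A σ) := by
    wlog hxy : x ≤ y generalizing x y
    · simpa only [dist_comm] using this y hy x hx (le_of_not_ge hxy)
    refine (h x hx y hy hxy).trans ((le_abs_self _).trans_eq ?_)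
    rw [dist_comm, Real.dist_eq, intervalIntegral.integral_interval_sub_left (hint hy) (hint hx)]
  refine squeeze_zero' (Eventually.of_forall fun I => Finset.sum_nonneg fun i _ => dist_nonneg) ?_
    (hA.absolutelyContinuousOnInterval_intervalIntegral left_mem_uIcc)
  filter_upwards [mem_inf_of_right (mem_principal_self _)] with I hI
  exact Finset.sum_le_sum fun i hi => hle _ (hI.1 i hi).1 _ (hI.1 i hi).2

variable {d : ℕ}

local notation "𝔼" => EuclideanSpace ℝ (Fin d)

variable {T : ℝ} {V : ℝ → EuclideanSpace ℝ (Fin d) → EuclideanSpace ℝ (Fin d)} {A ρ : ℝ → ℝ}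
  {s t δ : ℝ} {φ : EuclideanSpace ℝ (Fin d) → ℝ} {L B : ℝ}

theorem abs_sInt_sub_le {ν : SignedMeasure 𝔼} {M : ℝ} (hM : ν.totalVariation.real univ ≤ M)
    {f g : 𝔼 → ℝ} (hf : Integrable f ν.totalVariation) (hg : Integrable g ν.totalVariation)
    {c : ℝ} (h : ∀ x, |f x - g x| ≤ c) : |sInt ν f - sInt ν g| ≤ M * c := by
  have hc : 0 ≤ c := (abs_nonneg _).trans (h 0)
  rw [← sInt_sub ν hf hg]
  exact (abs_sInt_le ν h).trans (by gcongr)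

namespace TestBound

theorem integrable (hφ : TestBound φ L B) (p : Measure 𝔼) [IsFiniteMeasure p] : Integrable φ p :=
  hφ.contDiff.continuous.integrable_of_hasCompactSupport hφ.hasCompactSupport

theorem integrable_fderiv_apply (hφ : TestBound φ L B) {v : 𝔼 → 𝔼} (hv : Continuous v)
    (p : Measure 𝔼) [IsFiniteMeasure p] : Integrable (fun x => fderiv ℝ φ x (v x)) p :=
  (hφ.contDiff_fderiv.continuous.clm_apply hv).integrable_of_hasCompactSupport
    ((hφ.hasCompactSupport.fderiv ℝ).mono fun x hx h => hx (by simp [h]))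

end TestBound

namespace IsControlled

theorem intervalIntegrable_sInt_fderiv_apply (h : IsControlled T V A ρ) (hφ : TestBound φ L B)
    (hst : s ≤ t) (hs : s ∈ Icc 0 T) (ht : t ∈ Icc 0 T) (ν : SignedMeasure 𝔼) :
    IntervalIntegrable (fun σ => sInt ν fun x => fderiv ℝ φ x (V σ x)) volume s t :=
  (h.intervalIntegrable_integral_fderiv_apply hφ hst hs ht _).sub
    (h.intervalIntegrable_integral_fderiv_apply hφ hst hs ht _)

theorem integral_sInt_fderiv_apply (h : IsControlled T V A ρ) (hφ : TestBound φ L B)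
    (hst : s ≤ t) (hs : s ∈ Icc 0 T) (ht : t ∈ Icc 0 T) (ν : SignedMeasure 𝔼) :
    ∫ σ in s..t, sInt ν (fun x => fderiv ℝ φ x (V σ x)) =
      sInt ν fun x => fderiv ℝ φ x (drift V s t x) := by
  simp only [sInt]
  rw [intervalIntegral.integral_sub (h.intervalIntegrable_integral_fderiv_apply hφ hst hs ht _)
    (h.intervalIntegrable_integral_fderiv_apply hφ hst hs ht _),
    h.integral_integral_fderiv_apply hφ hst hs ht, h.integral_integral_fderiv_apply hφ hst hs ht]

end IsControlled

/-- A signed solution of the continuity equation whose total variation is at most `M` on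
`[0, T]`. -/
structure IsBoundedSolution {d : ℕ} (T : ℝ)
    (V : ℝ → EuclideanSpace ℝ (Fin d) → EuclideanSpace ℝ (Fin d)) (M : ℝ)
    (μ : ℝ → SignedMeasure (EuclideanSpace ℝ (Fin d))) : Prop where
  isSignedSolution : IsSignedSolution T V μ
  totalVariation_le : ∀ t ∈ Icc 0 T, (μ t).totalVariation.real univ ≤ M

namespace IsBoundedSolution

variable {M : ℝ} {μ : ℝ → SignedMeasure (EuclideanSpace ℝ (Fin d))}

theorem bound_nonneg (hμ : IsBoundedSolution T V M μ) (ht : t ∈ Icc 0 T) : 0 ≤ M :=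
  measureReal_nonneg.trans (hμ.totalVariation_le t ht)

theorem abs_sInt_sub_le_integral (hμ : IsBoundedSolution T V M μ) (h : IsControlled T V A ρ)
    {u : 𝔼 → ℝ} (hu : ContDiff ℝ ∞ u) (huc : HasCompactSupport u) {P : ℝ}
    (hP : ∀ x, ‖fderiv ℝ u x‖ ≤ P) (hst : s ≤ t) (hs : s ∈ Icc 0 T) (ht : t ∈ Icc 0 T) :
    |sInt (μ t) u - sInt (μ s) u| ≤ ∫ σ in s..t, M * (P * A σ) := by
  have hP0 : 0 ≤ P := (norm_nonneg _).trans (hP 0)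
  rw [hμ.isSignedSolution u hu huc s hs t ht]
  refine intervalIntegral.norm_integral_le_of_norm_le (E := ℝ) hst ?_
    (((h.intervalIntegrable hs ht).const_mul P).const_mul M)
  filter_upwards [(ae_restrict_iff' measurableSet_Ioc).1 (h.ae_norm_le hs ht)] with σ hσ hσI
  have hA := h.nonneg σ
  refine (abs_sInt_le (μ σ) fun x =>
    (fderiv ℝ u x).le_of_opNorm_le_of_le (hP x) (hσ hσI x)).trans ?_
  gcongr
  exact hμ.totalVariation_le σ ⟨hs.1.trans hσI.1.le, hσI.2.trans ht.2⟩

theorem continuousOn_sInt (hμ : IsBoundedSolution T V M μ) (h : IsControlled T V A ρ)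
    {u : 𝔼 → ℝ} (hu : ContDiff ℝ ∞ u) (huc : HasCompactSupport u) :
    ContinuousOn (fun t => sInt (μ t) u) (Icc 0 T) := by
  obtain ⟨L, B, hB⟩ := exists_testBound hu huc
  intro r hr
  have hT : 0 ≤ T := hr.1.trans hr.2
  rw [← uIcc_of_le hT] at hr ⊢
  refine (absolutelyContinuousOnInterval_of_dist_le_integral (A := fun σ => M * (L * A σ))
    (((h.intervalIntegrable ⟨le_rfl, hT⟩ ⟨hT, le_rfl⟩).const_mul _).const_mul _)
    fun x hx y hy hxy => ?_).continuousOn r hr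
  rw [uIcc_of_le hT] at hx hy
  rw [dist_comm]
  exact hμ.abs_sInt_sub_le_integral h hu huc hB.norm_fderiv_le hxy hx hy

theorem intervalIntegrable_sInt_fderiv_apply (hμ : IsBoundedSolution T V M μ)
    (h : IsControlled T V A ρ) (hφ : TestBound φ L B) (hst : s ≤ t) (hs : s ∈ Icc 0 T)
    (ht : t ∈ Icc 0 T) :
    IntervalIntegrable (fun σ => sInt (μ σ) fun x => fderiv ℝ φ x (V σ x)) volume s t := by
  have hsub : Ioc s t ⊆ Icc 0 T := Ioc_subset_Icc_self.trans (Icc_subset_Icc hs.1 ht.2)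
  have hmeas : Measurable fun σ : Icc 0 T => sInt (μ σ) fun x => fderiv ℝ φ x (V σ x) :=
    measurable_sInt_clm_apply (μ := fun σ : Icc 0 T => μ σ) (V := fun σ : Icc 0 T => V σ)
      (fun u hu huc => (hμ.continuousOn_sInt h hu huc).domRestrict.measurable)
      hφ.contDiff_fderiv.continuous (hφ.hasCompactSupport.fderiv ℝ)
      (fun x => h.measurable.of_uncurry_right.comp measurable_subtype_coe)
      fun σ => h.continuous σ
  refine ((h.intervalIntegrable hs ht).const_mul (M * L)).mono_fun' ?_ ?_ <;> rw [uIoc_of_le hst]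
  · exact ((aemeasurable_restrict_of_measurable_subtype measurableSet_Icc
      hmeas).mono_set hsub).aestronglyMeasurable
  · filter_upwards [h.ae_norm_le hs ht, ae_restrict_mem measurableSet_Ioc] with σ hσ hσI
    have hL := hφ.fst_nonneg
    have hA := h.nonneg σ
    refine (abs_sInt_le (μ σ) fun x => hφ.abs_fderiv_apply_le (hσ x)).trans ?_
    rw [← mul_assoc]
    gcongr
    exact hμ.totalVariation_le σ (hsub hσI)

theorem ae_abs_sInt_fderiv_apply_sub_le (hμ : IsBoundedSolution T V M μ)
    (h : IsControlled T V A ρ) (hφ : TestBound φ L B) (hs : s ∈ Icc 0 T) (ht : t ∈ Icc 0 T)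
    (hδ : 0 < δ) (hδ1 : δ < 1) :
    ∀ᵐ σ ∂volume.restrict (Ioc s t),
      |sInt (μ σ) (fun x => fderiv ℝ φ x (V σ x)) - sInt (μ s) (fun x => fderiv ℝ φ x (V σ x))| ≤
        M * (2 * L * ρ δ + (L * mollRate 𝔼 ρ δ + B) * ∫ r in s..t, A r) * A σ := by
  filter_upwards [h.ae_norm_le hs ht, h.ae_norm_sub_le hs ht hδ1,
    ae_restrict_mem measurableSet_Ioc] with σ hbound hosc hσ
  have hσT : σ ∈ Icc 0 T := ⟨hs.1.trans hσ.1.le, hσ.2.trans ht.2⟩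
  have hM := hμ.bound_nonneg hs
  obtain ⟨g, hg, hgc, hVg, hDg⟩ :=
    hφ.exists_contDiff_approx_fderiv_apply hδ (h.continuous σ) hbound hosc
  have happrox {r : ℝ} (hr : r ∈ Icc 0 T) :=
    abs_sInt_sub_le (hμ.totalVariation_le r hr) (hφ.integrable_fderiv_apply (h.continuous σ) _)
      (hg.continuous.integrable_of_hasCompactSupport hgc) hVg
  have hD : 0 ≤ L * (mollConst 𝔼 * (A σ * ρ δ) / δ) + B * A σ := (norm_nonneg _).trans (hDg 0)
  have hmove : |sInt (μ σ) g - sInt (μ s) g| ≤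
      M * ((L * (mollConst 𝔼 * (A σ * ρ δ) / δ) + B * A σ) * ∫ r in s..t, A r) := by
    refine (hμ.abs_sInt_sub_le_integral h hg hgc hDg hσ.1.le hs hσT).trans ?_
    rw [intervalIntegral.integral_const_mul, intervalIntegral.integral_const_mul]
    gcongr
    exact intervalIntegral.integral_mono_interval le_rfl hσ.1.le hσ.2
      (Eventually.of_forall h.nonneg) (h.intervalIntegrable hs ht)
  have hsplit : M * (2 * L * ρ δ + (L * mollRate 𝔼 ρ δ + B) * ∫ r in s..t, A r) * A σ =
      M * (L * (A σ * ρ δ)) +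
        M * ((L * (mollConst 𝔼 * (A σ * ρ δ) / δ) + B * A σ) * ∫ r in s..t, A r) +
        M * (L * (A σ * ρ δ)) := by
    rw [mollRate]
    ring
  rw [hsplit]
  refine (abs_sub_le _ (sInt (μ s) g) _).trans
    (add_le_add ((abs_sub_le _ (sInt (μ σ) g) _).trans (add_le_add (happrox hσT) hmove)) ?_)
  rw [abs_sub_comm]
  exact happrox hs

theorem abs_sInt_sub_sInt_sub_drift_le (hμ : IsBoundedSolution T V M μ) (h : IsControlled T V A ρ)
    (hφ : TestBound φ L B) (hst : s ≤ t) (hs : s ∈ Icc 0 T) (ht : t ∈ Icc 0 T)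
    (hδ : 0 < δ) (hδ1 : δ < 1) :
    |sInt (μ t) φ - sInt (μ s) φ - sInt (μ s) (fun x => fderiv ℝ φ x (drift V s t x))| ≤
      M * (2 * L * ρ δ + (L * mollRate 𝔼 ρ δ + B) * ∫ σ in s..t, A σ) * ∫ σ in s..t, A σ := by
  rw [hμ.isSignedSolution φ hφ.contDiff hφ.hasCompactSupport s hs t ht,
    ← h.integral_sInt_fderiv_apply hφ hst hs ht, ← intervalIntegral.integral_sub
      (hμ.intervalIntegrable_sInt_fderiv_apply h hφ hst hs ht)
      (h.intervalIntegrable_sInt_fderiv_apply hφ hst hs ht _),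
    ← intervalIntegral.integral_const_mul]
  refine intervalIntegral.norm_integral_le_of_norm_le (E := ℝ) hst ?_
    ((h.intervalIntegrable hs ht).const_mul _)
  exact (ae_restrict_iff' measurableSet_Ioc).1
    (hμ.ae_abs_sInt_fderiv_apply_sub_le h hφ hs ht hδ hδ1)

theorem abs_sInt_sub_comp_mollify_drift_le (hμ : IsBoundedSolution T V M μ)
    (h : IsControlled T V A ρ) (hφ : TestBound φ L B) (hst : s ≤ t) (hs : s ∈ Icc 0 T)
    (ht : t ∈ Icc 0 T) (hδ : 0 < δ) (hδ1 : δ < 1) :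
    |sInt (μ t) φ - sInt (μ s) (fun x => φ (x + mollify δ (drift V s t) x))| ≤
      M * (3 * L * ρ δ * (∫ σ in s..t, A σ) +
        (2 * B + L * mollRate 𝔼 ρ δ) * (∫ σ in s..t, A σ) ^ 2) := by
  have hφs := hφ.integrable (μ s).totalVariation
  have hDφ := hφ.integrable_fderiv_apply (h.continuous_drift hst hs ht) (μ s).totalVariation
  have hψ := (hφ.comp_mollify_drift h hst hs ht hδ hδ1).integrable (μ s).totalVariation
  have hmove := hμ.abs_sInt_sub_sInt_sub_drift_le h hφ hst hs ht hδ hδ1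
  have htaylor : |sInt (μ s) (fun x => φ (x + mollify δ (drift V s t) x) - φ x) -
      sInt (μ s) (fun x => fderiv ℝ φ x (drift V s t x))| ≤
      M * (L * (ρ δ * ∫ σ in s..t, A σ) + B * (∫ σ in s..t, A σ) ^ 2) :=
    abs_sInt_sub_le (hμ.totalVariation_le s hs) (hψ.sub hφs) hDφ fun x => by
      rw [Pi.sub_apply, abs_sub_comm, sub_sub_eq_add_sub, add_comm]
      exact hφ.abs_add_fderiv_drift_sub_le h hst hs ht hδ hδ1 x
  rw [sInt_sub (μ s) hψ hφs, abs_sub_comm] at htaylor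
  have hsum := (abs_add_le _ _).trans (add_le_add hmove htaylor)
  rw [sub_add_sub_cancel, sub_sub_sub_cancel_right] at hsum
  exact hsum.trans_eq (by ring)

end IsBoundedSolution

end BoundedSolutions

section Chaining

theorem exists_integral_le_of_integral_le_add {A : ℝ → ℝ} {s t a b : ℝ} (hst : s ≤ t)
    (hA : IntervalIntegrable A volume s t) (hA0 : ∀ σ, 0 ≤ A σ) (ha : 0 ≤ a) (hb : 0 ≤ b)
    (h : ∫ σ in s..t, A σ ≤ a + b) :
    ∃ r ∈ Icc s t, ∫ σ in s..r, A σ ≤ a ∧ ∫ σ in r..t, A σ ≤ b := by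
  have hcont : ContinuousOn (fun r => ∫ σ in s..r, A σ) (Icc s t) := by
    rw [← uIcc_of_le hst]
    exact intervalIntegral.continuousOn_primitive_interval
      ((intervalIntegrable_iff' (by simp)).1 hA)
  have hmem : min a (∫ σ in s..t, A σ) ∈ Icc (∫ σ in s..s, A σ) (∫ σ in s..t, A σ) := by
    rw [intervalIntegral.integral_same]
    exact ⟨le_min ha (intervalIntegral.integral_nonneg hst fun σ _ => hA0 σ), min_le_right _ _⟩
  obtain ⟨r, hr, hrA⟩ := intermediate_value_Icc hst hcont hmem
  rw [← uIcc_of_le hst] at hr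
  have hadd := intervalIntegral.integral_add_adjacent_intervals
    (hA.mono_set (uIcc_subset_uIcc_left hr)) (hA.mono_set (uIcc_subset_uIcc_right hr))
  refine ⟨r, uIcc_of_le hst ▸ hr, hrA.trans_le (min_le_left _ _), ?_⟩
  rcases min_choice a (∫ σ in s..t, A σ) with hmin | hmin <;> rw [hmin] at hrA <;> linarith

variable {d : ℕ}

local notation "𝔼" => EuclideanSpace ℝ (Fin d)

variable {T : ℝ} {V : ℝ → EuclideanSpace ℝ (Fin d) → EuclideanSpace ℝ (Fin d)} {A ρ : ℝ → ℝ}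
  {r s t δ : ℝ} {φ ψ χ : EuclideanSpace ℝ (Fin d) → ℝ} {L B e e' : ℝ}

/-- Up to the error `e` per unit of mass, every bounded solution of the continuity equation sees
`ψ` at time `s` as it sees `φ` at time `t`. -/
def IsPullback {d : ℕ} (T : ℝ) (V : ℝ → EuclideanSpace ℝ (Fin d) → EuclideanSpace ℝ (Fin d))
    (s t : ℝ) (φ ψ : EuclideanSpace ℝ (Fin d) → ℝ) (e : ℝ) : Prop :=
  ∀ M μ, IsBoundedSolution T V M μ → |sInt (μ t) φ - sInt (μ s) ψ| ≤ M * e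

theorem IsPullback.trans (h : IsPullback T V s t φ ψ e) (h' : IsPullback T V r s ψ χ e') :
    IsPullback T V r t φ χ (e + e') := fun M μ hμ => by
  rw [mul_add]
  exact (abs_sub_le _ _ _).trans (add_le_add (h M μ hμ) (h' M μ hμ))

theorem IsPullback.mono (h : IsPullback T V s t φ ψ e) (hs : s ∈ Icc 0 T) (he : e ≤ e') :
    IsPullback T V s t φ ψ e' := fun M μ hμ =>
  (h M μ hμ).trans (mul_le_mul_of_nonneg_left he (hμ.bound_nonneg hs))

namespace IsControlled

theorem exists_isPullback_sum (h : IsControlled T V A ρ) {P : ℕ → (𝔼 → ℝ) → Prop} {η e : ℕ → ℝ}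
    (hη : ∀ k, 0 ≤ η k)
    (hstage : ∀ k, ∀ s ∈ Icc 0 T, ∀ t ∈ Icc 0 T, s ≤ t → ∫ σ in s..t, A σ ≤ η k →
      ∀ φ, P k φ → ∃ ψ, P (k + 1) ψ ∧ IsPullback T V s t φ ψ (e k))
    (n : ℕ) (hs : s ∈ Icc 0 T) (ht : t ∈ Icc 0 T) (hst : s ≤ t)
    (hA : ∫ σ in s..t, A σ ≤ ∑ k ∈ Finset.range (n + 1), η k) (hφ : P 0 φ) :
    ∃ ψ, P (n + 1) ψ ∧ IsPullback T V s t φ ψ (∑ k ∈ Finset.range (n + 1), e k) := by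
  induction n generalizing s with
  | zero => simpa using hstage 0 s hs t ht hst (by simpa using hA) φ hφ
  | succ n ih =>
    rw [Finset.sum_range_succ, add_comm] at hA
    obtain ⟨r, hr, hsr, hrt⟩ := exists_integral_le_of_integral_le_add hst
      (h.intervalIntegrable hs ht) h.nonneg (hη _) (Finset.sum_nonneg fun k _ => hη k) hA
    have hrT : r ∈ Icc 0 T := ⟨hs.1.trans hr.1, hr.2.trans ht.2⟩
    obtain ⟨ψ, hψ, hφψ⟩ := ih hrT hr.2 hrt
    obtain ⟨χ, hχ, hψχ⟩ := hstage (n + 1) s hs r hrT hr.1 hsr ψ hψ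
    rw [Finset.sum_range_succ]
    exact ⟨χ, hχ, hφψ.trans hψχ⟩

theorem exists_isPullback_step (h : IsControlled T V A ρ) (hδ : 0 < δ) (hδ1 : δ < 1)
    (hφ : TestBound φ L B) (hs : s ∈ Icc 0 T) (ht : t ∈ Icc 0 T) (hst : s ≤ t) {η : ℝ}
    (hη : ∫ σ in s..t, A σ ≤ η) :
    ∃ ψ : 𝔼 → ℝ, TestBound ψ (L * (1 + mollRate 𝔼 ρ δ * η))
        (B * (1 + mollRate 𝔼 ρ δ * η) ^ 2 + L * (mollConst₂ 𝔼 / δ ^ 2 * η)) ∧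
      IsPullback T V s t φ ψ
        (3 * L * ρ δ * η + (2 * B + L * mollRate 𝔼 ρ δ) * η ^ 2) := by
  have hL := hφ.fst_nonneg
  have hB := hφ.snd_nonneg
  have hρ := h.modulus_nonneg δ
  have hrate := mollRate_nonneg (E := 𝔼) hδ.le hρ
  have hb := mollConst₂_nonneg (E := 𝔼)
  have hH := h.integral_nonneg hst
  refine ⟨_, (hφ.comp_mollify_drift h hst hs ht hδ hδ1).mono (by gcongr) (by gcongr), ?_⟩
  refine IsPullback.mono (fun M μ hμ =>
    hμ.abs_sInt_sub_comp_mollify_drift_le h hφ hst hs ht hδ hδ1) hs ?_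
  gcongr

end IsControlled

end Chaining

section OsgoodIntegral

theorem lintegral_Ioc_one_div_le {ρ : ℝ → ℝ} {a b : ℝ} (hρ : MonotoneOn ρ (Ico a b))
    (ha : 0 < ρ a) :
    ∫⁻ r in Ioc a b, ENNReal.ofReal (1 / ρ r) ≤ ENNReal.ofReal ((b - a) / ρ a) := by
  rw [setLIntegral_congr Ico_ae_eq_Ioc.symm]
  calc ∫⁻ r in Ico a b, ENNReal.ofReal (1 / ρ r)
      ≤ ∫⁻ _ in Ico a b, ENNReal.ofReal (1 / ρ a) :=
        setLIntegral_mono measurable_const fun r hr => ENNReal.ofReal_le_ofReal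
          (one_div_le_one_div_of_le ha (hρ ⟨le_rfl, hr.1.trans_lt hr.2⟩ hr hr.1))
    _ = ENNReal.ofReal ((b - a) / ρ a) := by
        rw [setLIntegral_const, Real.volume_Ico, ← ENNReal.ofReal_mul (by positivity),
          one_div_mul_eq_div]

theorem Ioo_zero_one_subset_iUnion_Ioc_pow {y : ℝ} (hy : 0 < y) (hy1 : y < 1) :
    Ioo 0 1 ⊆ ⋃ k : ℕ, Ioc (y ^ (k + 1)) (y ^ k) := fun _ hr =>
  mem_iUnion.2 (exists_nat_pow_near_of_lt_one hr.1 hr.2.le hy hy1)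

theorem not_summable_half_pow_div {ρ : ℝ → ℝ} (hmono : MonotoneOn ρ (Ico 0 1))
    (hpos : ∀ k : ℕ, 0 < ρ ((1 / 2) ^ (k + 1)))
    (htop : ∫⁻ r in Ioo (0 : ℝ) 1, ENNReal.ofReal (1 / ρ r) = ⊤) :
    ¬Summable fun k : ℕ => (1 / 2 : ℝ) ^ (k + 1) / ρ ((1 / 2) ^ (k + 1)) := fun hsum => by
  have hterm (k : ℕ) : ∫⁻ r in Ioc ((1 / 2 : ℝ) ^ (k + 1)) ((1 / 2) ^ k), ENNReal.ofReal (1 / ρ r)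
      ≤ ENNReal.ofReal ((1 / 2) ^ (k + 1) / ρ ((1 / 2) ^ (k + 1))) := by
    have hsub : Ico ((1 / 2 : ℝ) ^ (k + 1)) ((1 / 2) ^ k) ⊆ Ico 0 1 :=
      Ico_subset_Ico (by positivity) (pow_le_one₀ (by norm_num) (by norm_num))
    refine (lintegral_Ioc_one_div_le (hmono.mono hsub) (hpos k)).trans_eq ?_
    congr 2
    ring
  refine hsum.tsum_ofReal_ne_top (top_le_iff.1 ?_)
  rw [← htop]
  exact (lintegral_mono_set
    (Ioo_zero_one_subset_iUnion_Ioc_pow one_half_pos one_half_lt_one)).trans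
    ((lintegral_iUnion_le _ _).trans (ENNReal.tsum_le_tsum hterm))

theorem exists_le_sum_div_mollRate {E : Type*} [NormedAddCommGroup E] [InnerProductSpace ℝ E]
    [FiniteDimensional ℝ E] [MeasurableSpace E] [BorelSpace E] {ρ : ℝ → ℝ}
    (hmono : MonotoneOn ρ (Ico 0 1)) (hpos : ∀ k : ℕ, 0 < ρ ((1 / 2) ^ (k + 1)))
    (htop : ∫⁻ r in Ioo (0 : ℝ) 1, ENNReal.ofReal (1 / ρ r) = ⊤) {c : ℝ} (hc : 0 < c) (K : ℕ)
    (H : ℝ) : ∃ n, H ≤ ∑ k ∈ Finset.range (n + 1), c / mollRate E ρ ((1 / 2) ^ (k + K + 1)) := by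
  have hκ := mollConst_pos (E := E)
  have hdiv := (not_summable_iff_tendsto_nat_atTop_of_nonneg fun k => by
    have := hpos (k + K)
    positivity).1 (mt (summable_nat_add_iff K).1 (not_summable_half_pow_div hmono hpos htop))
  obtain ⟨n, hn⟩ := (((hdiv.const_mul_atTop (div_pos hc hκ)).comp
    (tendsto_add_atTop_nat 1)).eventually_ge_atTop H).exists
  refine ⟨n, hn.trans_eq ?_⟩
  rw [Function.comp_apply, Finset.mul_sum]
  refine Finset.sum_congr rfl fun k _ => ?_
  rw [mollRate, div_mul_div_comm, div_div_eq_mul_div]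

end OsgoodIntegral

section Scales

variable {d : ℕ}

local notation "𝔼" => EuclideanSpace ℝ (Fin d)

variable {T : ℝ} {V : ℝ → EuclideanSpace ℝ (Fin d) → EuclideanSpace ℝ (Fin d)} {A ρ : ℝ → ℝ}
  {s t δ : ℝ} {φ : EuclideanSpace ℝ (Fin d) → ℝ} {L B ε : ℝ}

namespace IsControlled

theorem exists_isPullback_step_exp (h : IsControlled T V A ρ) (hδ : 0 < δ) (hδ1 : δ < 1)
    {r η : ℝ} (hr : 0 ≤ r) (hL : 0 ≤ L) (hB : 0 ≤ B)
    (hφ : TestBound φ (L * Real.exp (mollRate 𝔼 ρ δ * r))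
      ((B + L * (mollConst₂ 𝔼 / δ ^ 2 * r)) * Real.exp (mollRate 𝔼 ρ δ * r) ^ 2))
    (hs : s ∈ Icc 0 T) (ht : t ∈ Icc 0 T) (hst : s ≤ t) (hη : ∫ σ in s..t, A σ ≤ η) :
    ∃ ψ : 𝔼 → ℝ, TestBound ψ (L * Real.exp (mollRate 𝔼 ρ δ * (r + η)))
        ((B + L * (mollConst₂ 𝔼 / δ ^ 2 * (r + η))) * Real.exp (mollRate 𝔼 ρ δ * (r + η)) ^ 2) ∧
      IsPullback T V s t φ ψ (3 * (L * Real.exp (mollRate 𝔼 ρ δ * r)) * ρ δ * η +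
        (2 * ((B + L * (mollConst₂ 𝔼 / δ ^ 2 * r)) * Real.exp (mollRate 𝔼 ρ δ * r) ^ 2) +
          L * Real.exp (mollRate 𝔼 ρ δ * r) * mollRate 𝔼 ρ δ) * η ^ 2) := by
  obtain ⟨ψ, hψ, hp⟩ := h.exists_isPullback_step hδ hδ1 hφ hs ht hst hη
  have hη0 : 0 ≤ η := (h.integral_nonneg hst).trans hη
  have hρ := h.modulus_nonneg δ
  have ha := mollRate_nonneg (E := 𝔼) hδ.le hρ
  have hb := mollConst₂_nonneg (E := 𝔼)
  have hgrowth : 1 + mollRate 𝔼 ρ δ * η ≤ Real.exp (mollRate 𝔼 ρ δ * η) := by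
    rw [add_comm]
    exact Real.add_one_le_exp _
  refine ⟨ψ, hψ.mono ?_ ?_, hp⟩ <;> rw [mul_add (mollRate 𝔼 ρ δ), Real.exp_add]
  · rw [← mul_assoc]
    gcongr
  · set p := Real.exp (mollRate 𝔼 ρ δ * r)
    set q := Real.exp (mollRate 𝔼 ρ δ * η)
    have hp1 : 1 ≤ p := Real.one_le_exp (by positivity)
    have hq1 : 1 ≤ q := Real.one_le_exp (by positivity)
    calc (B + L * (mollConst₂ 𝔼 / δ ^ 2 * r)) * p ^ 2 * (1 + mollRate 𝔼 ρ δ * η) ^ 2 +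
          L * p * (mollConst₂ 𝔼 / δ ^ 2 * η)
        ≤ (B + L * (mollConst₂ 𝔼 / δ ^ 2 * r)) * p ^ 2 * q ^ 2 +
          L * (p * q) ^ 2 * (mollConst₂ 𝔼 / δ ^ 2 * η) := by
          gcongr
          exact (le_mul_of_one_le_right (by positivity) hq1).trans
            (le_self_pow₀ (one_le_mul_of_one_le_of_one_le hp1 hq1) two_ne_zero)
      _ = (B + L * (mollConst₂ 𝔼 / δ ^ 2 * (r + η))) * (p * q) ^ 2 := by ring

theorem exists_isPullback_of_scale (h : IsControlled T V A ρ) (hδ : 0 < δ) (hδ1 : δ < 1)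
    (hφ : TestBound φ L B) (hs : s ∈ Icc 0 T) (ht : t ∈ Icc 0 T) (hst : s ≤ t) {H : ℝ}
    (hH : ∫ σ in s..t, A σ ≤ H) (hε : 0 < ε) :
    ∃ (ψ : 𝔼 → ℝ) (B' : ℝ), TestBound ψ (L * Real.exp (mollRate 𝔼 ρ δ * H)) B' ∧
      IsPullback T V s t φ ψ (3 * (L * Real.exp (mollRate 𝔼 ρ δ * H)) * ρ δ * H + ε) := by
  have hL := hφ.fst_nonneg
  have hB := hφ.snd_nonneg
  have hH0 : 0 ≤ H := (h.integral_nonneg hst).trans hH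
  have hρ := h.modulus_nonneg δ
  have ha := mollRate_nonneg (E := 𝔼) hδ.le hρ
  have hb := mollConst₂_nonneg (E := 𝔼)
  let L' (r : ℝ) : ℝ := L * Real.exp (mollRate 𝔼 ρ δ * r)
  let B' (r : ℝ) : ℝ :=
    (B + L * (mollConst₂ 𝔼 / δ ^ 2 * r)) * Real.exp (mollRate 𝔼 ρ δ * r) ^ 2
  let e (η r : ℝ) : ℝ := 3 * L' r * ρ δ * η + (2 * B' r + L' r * mollRate 𝔼 ρ δ) * η ^ 2
  have he {η r : ℝ} (hη : 0 ≤ η) (hrH : r ≤ H) : e η r ≤ e η H := by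
    simp only [e, L', B']
    gcongr
  obtain ⟨N, hN⟩ := exists_nat_ge ((2 * B' H + L' H * mollRate 𝔼 ρ δ) * H ^ 2 / ε)
  set η : ℝ := H / (N + 1 : ℕ)
  have hη : 0 ≤ η := by positivity
  have hηN : (N + 1 : ℕ) * η = H := mul_div_cancel₀ _ (by positivity)
  obtain ⟨ψ, hψ, hp⟩ := h.exists_isPullback_sum
    (P := fun k φ => TestBound φ (L' (k * η)) (B' (k * η))) (η := fun _ => η)
    (e := fun k => e η (k * η)) (n := N) (fun _ => hη)
    (fun k s hs t ht hst hA φ hφ => by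
      rw [Nat.cast_succ, add_one_mul]
      exact h.exists_isPullback_step_exp hδ hδ1 (by positivity) hL hB hφ hs ht hst hA)
    hs ht hst (by simpa [← hηN] using hH) (by simpa [L', B'] using hφ)
  rw [hηN] at hψ
  refine ⟨ψ, B' H, hψ, hp.mono hs ?_⟩
  calc ∑ k ∈ Finset.range (N + 1), e η (k * η)
      ≤ ∑ _k ∈ Finset.range (N + 1), e η H := Finset.sum_le_sum fun k hk =>
        he hη (hηN ▸ by gcongr; exact (Finset.mem_range.1 hk).le)
    _ = 3 * L' H * ρ δ * H + (2 * B' H + L' H * mollRate 𝔼 ρ δ) * H ^ 2 / (N + 1 : ℕ) := by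
        simp only [Finset.sum_const, Finset.card_range, nsmul_eq_mul, e, η]
        field_simp
    _ ≤ 3 * L' H * ρ δ * H + ε := by
        gcongr
        rw [div_le_iff₀ hε] at hN
        rw [div_le_iff₀ (by positivity), mul_comm ε]
        push_cast
        nlinarith

end IsControlled

end Scales

section Dyadic

variable {d : ℕ}

local notation "𝔼" => EuclideanSpace ℝ (Fin d)

variable {T : ℝ} {V : ℝ → EuclideanSpace ℝ (Fin d) → EuclideanSpace ℝ (Fin d)} {A ρ : ℝ → ℝ}
  {s t : ℝ} {φ : EuclideanSpace ℝ (Fin d) → ℝ} {L B ε : ℝ}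

theorem half_pow_succ_lt_one (k : ℕ) : (1 / 2 : ℝ) ^ (k + 1) < 1 :=
  pow_lt_one₀ (by norm_num) (by norm_num) k.succ_ne_zero

theorem sum_three_quarters_pow_le (n : ℕ) : ∑ k ∈ Finset.range n, (3 / 4 : ℝ) ^ k ≤ 4 := by
  refine ((summable_geometric_of_lt_one (by norm_num) (by norm_num)).sum_le_tsum _
    fun k _ => by positivity).trans_eq ?_
  rw [tsum_geometric_of_lt_one (by norm_num) (by norm_num)]
  norm_num

namespace IsControlled

theorem exists_isPullback_growth_three_halves {δ : ℝ} (h : IsControlled T V A ρ) (hδ : 0 < δ)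
    (hδ1 : δ < 1) (hρ : 0 < ρ δ) (hφ : TestBound φ L B) (hs : s ∈ Icc 0 T) (ht : t ∈ Icc 0 T)
    (hst : s ≤ t) (hA : ∫ σ in s..t, A σ ≤ Real.log (3 / 2) / mollRate 𝔼 ρ δ) :
    ∃ (ψ : 𝔼 → ℝ) (B' : ℝ), TestBound ψ (L * (3 / 2)) B' ∧
      IsPullback T V s t φ ψ ((9 / 2 * L / mollConst 𝔼 + 1) * δ) := by
  have hκ := mollConst_pos (E := 𝔼)
  have hL := hφ.fst_nonneg
  have hrate : mollRate 𝔼 ρ δ ≠ 0 := by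
    rw [mollRate]
    positivity
  have hlog : Real.log (3 / 2) ≤ 1 :=
    (Real.log_le_sub_one_of_pos (by norm_num)).trans (by norm_num)
  obtain ⟨ψ, B', hψ, hp⟩ := h.exists_isPullback_of_scale hδ hδ1 hφ hs ht hst hA hδ
  rw [mul_div_cancel₀ _ hrate, Real.exp_log (by norm_num)] at hψ hp
  refine ⟨ψ, B', hψ, hp.mono hs ?_⟩
  calc 3 * (L * (3 / 2)) * ρ δ * (Real.log (3 / 2) / mollRate 𝔼 ρ δ) + δ
      = (9 / 2 * L / mollConst 𝔼 * Real.log (3 / 2) + 1) * δ := by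
        rw [mollRate]
        field_simp
        ring
    _ ≤ (9 / 2 * L / mollConst 𝔼 + 1) * δ := by
        gcongr
        exact mul_le_of_le_one_right (by positivity) hlog

theorem exists_isPullback_dyadic (h : IsControlled T V A ρ)
    (hpos : ∀ k : ℕ, 0 < ρ ((1 / 2) ^ (k + 1))) (hφ : TestBound φ L B) (hs : s ∈ Icc 0 T)
    (ht : t ∈ Icc 0 T) (hst : s ≤ t) (K n : ℕ)
    (hA : ∫ σ in s..t, A σ ≤ ∑ k ∈ Finset.range (n + 1),
      Real.log (3 / 2) / mollRate 𝔼 ρ ((1 / 2) ^ (k + K + 1))) :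
    ∃ (ψ : 𝔼 → ℝ) (L' B' : ℝ), TestBound ψ L' B' ∧
      IsPullback T V s t φ ψ ((9 / 2 * L / mollConst 𝔼 + 1) * (1 / 2) ^ K * 4) := by
  have hκ := mollConst_pos (E := 𝔼)
  have hL := hφ.fst_nonneg
  obtain ⟨ψ, ⟨B', hψ⟩, hp⟩ := h.exists_isPullback_sum
    (P := fun k φ => ∃ B, TestBound φ (L * (3 / 2) ^ k) B)
    (e := fun k => (9 / 2 * L / mollConst 𝔼 + 1) * (1 / 2) ^ K * (3 / 4) ^ k)
    (fun k => div_nonneg (Real.log_nonneg (by norm_num))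
      (mollRate_nonneg (by positivity) (hpos (k + K)).le))
    (fun k s hs t ht hst hA φ ⟨B, hφ⟩ => by
      obtain ⟨ψ, B', hψ, hp⟩ := h.exists_isPullback_growth_three_halves (by positivity)
        (half_pow_succ_lt_one (k + K)) (hpos (k + K)) hφ hs ht hst hA
      refine ⟨ψ, ⟨B', by rwa [pow_succ, ← mul_assoc]⟩, hp.mono hs ?_⟩
      calc (9 / 2 * (L * (3 / 2) ^ k) / mollConst 𝔼 + 1) * (1 / 2) ^ (k + K + 1)
          ≤ ((9 / 2 * L / mollConst 𝔼 + 1) * (3 / 2) ^ k) * (1 / 2) ^ (k + K) := by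
            gcongr ?_ * ?_
            · rw [add_one_mul, ← mul_assoc, mul_div_right_comm]
              gcongr
              exact one_le_pow₀ (by norm_num)
            · exact pow_le_pow_of_le_one (by norm_num) (by norm_num) (Nat.le_succ _)
        _ = (9 / 2 * L / mollConst 𝔼 + 1) * (1 / 2) ^ K * (3 / 4) ^ k := by
            rw [show (3 / 4 : ℝ) = 3 / 2 * (1 / 2) by norm_num, mul_pow, pow_add]
            ring)
    n hs ht hst hA ⟨B, by simpa using hφ⟩
  refine ⟨ψ, _, B', hψ, hp.mono hs ?_⟩
  rw [← Finset.mul_sum]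
  gcongr
  exact sum_three_quarters_pow_le _

theorem exists_isPullback (h : IsControlled T V A ρ)
    (htop : ∫⁻ r in Ioo (0 : ℝ) 1, ENNReal.ofReal (1 / ρ r) = ⊤) (hφ : TestBound φ L B)
    (hs : s ∈ Icc 0 T) (ht : t ∈ Icc 0 T) (hst : s ≤ t) (hε : 0 < ε) :
    ∃ (ψ : 𝔼 → ℝ) (L' B' : ℝ), TestBound ψ L' B' ∧ IsPullback T V s t φ ψ ε := by
  have hκ := mollConst_pos (E := 𝔼)
  have hL := hφ.fst_nonneg
  by_cases hpos : ∀ k : ℕ, 0 < ρ ((1 / 2) ^ (k + 1))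
  · set c := (9 / 2 * L / mollConst 𝔼 + 1) * 4
    have hc : 0 < c := by positivity
    obtain ⟨K, hK⟩ := exists_pow_lt_of_lt_one (div_pos hε hc) one_half_lt_one
    obtain ⟨n, hn⟩ := exists_le_sum_div_mollRate (E := 𝔼) h.modulus_mono hpos htop
      (Real.log_pos (by norm_num : (1 : ℝ) < 3 / 2)) K (∫ σ in s..t, A σ)
    obtain ⟨ψ, L', B', hψ, hp⟩ := h.exists_isPullback_dyadic hpos hφ hs ht hst K n hn
    refine ⟨ψ, L', B', hψ, hp.mono hs ?_⟩
    rw [mul_right_comm]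
    exact ((lt_div_iff₀' hc).1 hK).le
  · push Not at hpos
    obtain ⟨k, hk⟩ := hpos
    have hρ : ρ ((1 / 2) ^ (k + 1)) = 0 := hk.antisymm (h.modulus_nonneg _)
    obtain ⟨ψ, B', hψ, hp⟩ := h.exists_isPullback_of_scale (by positivity)
      (half_pow_succ_lt_one k) hφ hs ht hst le_rfl hε
    exact ⟨ψ, _, B', hψ, hp.mono hs (by rw [hρ]; simp)⟩

end IsControlled

end Dyadic

section Trajectories

variable {d : ℕ}

local notation "𝔼" => EuclideanSpace ℝ (Fin d)

variable {T : ℝ} {hT : 0 ≤ T} {V : ℝ → EuclideanSpace ℝ (Fin d) → EuclideanSpace ℝ (Fin d)}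
  {A ρ : ℝ → ℝ} {s t : ℝ} {γ : C(Icc 0 T, EuclideanSpace ℝ (Fin d))}

namespace IsSolution

theorem sub_eq_integral (hγ : IsSolution T hT V γ) (h : IsControlled T V A ρ) (hs : s ∈ Icc 0 T)
    (ht : t ∈ Icc 0 T) :
    IccExtend hT γ t - IccExtend hT γ s = ∫ σ in s..t, V σ (IccExtend hT γ σ) := by
  have hint {r : ℝ} (hr : r ∈ Icc 0 T) :
      IntervalIntegrable (fun σ => V σ (IccExtend hT γ σ)) volume 0 r :=
    h.intervalIntegrable_comp hr.1 (left_mem_Icc.2 hT) hr γ.continuous.Icc_extend'.measurable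
  rw [← intervalIntegral.integral_interval_sub_left (hint ht) (hint hs),
    IccExtend_of_mem hT γ ht, IccExtend_of_mem hT γ hs, ← sub_sub_sub_cancel_right _ _
      (γ ⟨0, left_mem_Icc.2 hT⟩), hγ, hγ]
  rfl

theorem norm_sub_le_integral (hγ : IsSolution T hT V γ) (h : IsControlled T V A ρ)
    (hst : s ≤ t) (hs : s ∈ Icc 0 T) (ht : t ∈ Icc 0 T) :
    ‖IccExtend hT γ t - IccExtend hT γ s‖ ≤ ∫ σ in s..t, A σ := by
  rw [hγ.sub_eq_integral h hs ht]
  refine intervalIntegral.norm_integral_le_of_norm_le hst ?_ (h.intervalIntegrable hs ht)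
  exact (ae_restrict_iff' measurableSet_Ioc).1 ((h.ae_norm_le hs ht).mono fun σ hσ => hσ _)

theorem ae_hasDerivAt (hγ : IsSolution T hT V γ) (h : IsControlled T V A ρ) :
    ∀ᵐ σ ∂volume.restrict (Icc 0 T),
      HasDerivAt (IccExtend hT γ) (V σ (IccExtend hT γ σ)) σ := by
  have h0 : (0 : ℝ) ∈ Icc 0 T := left_mem_Icc.2 hT
  have hint := h.intervalIntegrable_comp hT h0 (right_mem_Icc.2 hT)
    (γ.continuous.Icc_extend' (h := hT)).measurable
  rw [← restrict_Ioo_eq_restrict_Icc]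
  filter_upwards [ae_restrict_of_ae hint.ae_hasDerivAt_integral,
    ae_restrict_mem measurableSet_Ioo] with σ hσ hσT
  rw [uIcc_of_le hT] at hσ
  refine ((hσ (Ioo_subset_Icc_self hσT) 0 h0).const_add
    (IccExtend hT γ 0)).congr_of_eventuallyEq ?_
  filter_upwards [Icc_mem_nhds hσT.1 hσT.2] with τ hτ
  rw [← hγ.sub_eq_integral h h0 hτ, add_sub_cancel]

theorem absolutelyContinuousOnInterval_comp (hγ : IsSolution T hT V γ) (h : IsControlled T V A ρ)
    {φ : 𝔼 → ℝ} {L B : ℝ} (hφ : TestBound φ L B) (hs : s ∈ Icc 0 T) (ht : t ∈ Icc 0 T) :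
    AbsolutelyContinuousOnInterval (fun σ => φ (IccExtend hT γ σ)) s t := by
  have hL := hφ.fst_nonneg
  have hsub := uIcc_subset_Icc hs ht
  refine absolutelyContinuousOnInterval_of_dist_le_integral (A := fun σ => L * A σ)
    ((h.intervalIntegrable hs ht).const_mul L) fun x hx y hy hxy => ?_
  rw [intervalIntegral.integral_const_mul, dist_comm, Real.dist_eq]
  refine (hφ.abs_sub_le _ _).trans ?_
  gcongr
  exact hγ.norm_sub_le_integral h hxy (hsub hx) (hsub hy)

theorem isBoundedSolution_dirac (hγ : IsSolution T hT V γ) (h : IsControlled T V A ρ) :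
    IsBoundedSolution T V 1 fun σ => (Measure.dirac (IccExtend hT γ σ)).toSignedMeasure where
  isSignedSolution u hu huc s hs t ht := by
    obtain ⟨L, B, hB⟩ := exists_testBound hu huc
    simp only [sInt_toSignedMeasure, integral_dirac]
    rw [← (hγ.absolutelyContinuousOnInterval_comp h hB hs ht).integral_deriv_eq_sub]
    refine intervalIntegral.integral_congr_ae_restrict ?_
    have hsub : uIoc s t ⊆ Icc 0 T := uIoc_subset_uIcc.trans (uIcc_subset_Icc hs ht)
    filter_upwards [ae_restrict_of_ae_restrict_of_subset hsub (hγ.ae_hasDerivAt h)] with σ hσ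
    exact ((hB.differentiable _).hasFDerivAt.comp_hasDerivAt σ hσ).deriv
  totalVariation_le t _ := by simp [totalVariation_toSignedMeasure]

end IsSolution

end Trajectories

section Transport

theorem continuous_of_forall_contDiff_comp {α E : Type*} [TopologicalSpace α]
    [NormedAddCommGroup E] [NormedSpace ℝ E] [FiniteDimensional ℝ E] {Y : α → E}
    (h : ∀ φ : E → ℝ, ContDiff ℝ ∞ φ → HasCompactSupport φ → Continuous fun a => φ (Y a)) :
    Continuous Y := by
  refine continuous_iff_continuousAt.2 fun a => Metric.tendsto_nhds.2 fun ε hε => ?_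
  let φ : ContDiffBump (Y a) := ⟨ε / 2, ε, half_pos hε, half_lt_self hε⟩
  have hpos : 0 < φ (Y a) := φ.pos_of_mem_ball (mem_ball_self hε)
  filter_upwards [(h φ φ.contDiff φ.hasCompactSupport).continuousAt.eventually_const_lt hpos]
    with b hb
  exact φ.support_eq.subset hb.ne'

variable {d : ℕ}

local notation "𝔼" => EuclideanSpace ℝ (Fin d)

variable {T : ℝ} {hT : 0 ≤ T} {V : ℝ → EuclideanSpace ℝ (Fin d) → EuclideanSpace ℝ (Fin d)}
  {A ρ : ℝ → ℝ} {X : ℝ → ℝ → EuclideanSpace ℝ (Fin d) → EuclideanSpace ℝ (Fin d)} {s t : ℝ}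
  {φ ψ : EuclideanSpace ℝ (Fin d) → ℝ}

namespace IsFlow

theorem apply_apply (hX : IsFlow T hT V X) (hs : s ∈ Icc 0 T) (ht : t ∈ Icc 0 T) (x : 𝔼) :
    X s t (X t s x) = x := by
  obtain ⟨γ, hγ, hγt, hγX, -⟩ := hX t ht x
  obtain ⟨γ', -, -, hγX', huniq⟩ := hX s hs (X t s x)
  have hγγ' := huniq γ hγ (hγX ⟨s, hs⟩).symm
  rw [hγX' ⟨t, ht⟩, ← hγγ', hγt]

theorem abs_comp_sub_le (hX : IsFlow T hT V X) (h : IsControlled T V A ρ) (hs : s ∈ Icc 0 T)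
    (ht : t ∈ Icc 0 T) {e : ℝ} (hψ : IsPullback T V s t φ ψ e) (x : 𝔼) :
    |φ (X s t x) - ψ x| ≤ e := by
  obtain ⟨γ, hγ, hγs, hγX, -⟩ := hX s hs x
  have hdirac := hψ 1 _ (hγ.isBoundedSolution_dirac h)
  rwa [sInt_toSignedMeasure, sInt_toSignedMeasure, integral_dirac, integral_dirac, one_mul,
    IccExtend_of_mem hT γ ht, IccExtend_of_mem hT γ hs, hγs, ← hγX ⟨t, ht⟩] at hdirac

theorem continuous_of_le (hX : IsFlow T hT V X) (h : IsControlled T V A ρ)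
    (htop : ∫⁻ r in Ioo (0 : ℝ) 1, ENNReal.ofReal (1 / ρ r) = ⊤) (hs : s ∈ Icc 0 T)
    (ht : t ∈ Icc 0 T) (hst : s ≤ t) : Continuous (X s t) := by
  refine continuous_of_forall_contDiff_comp fun φ hφ hφc => ?_
  obtain ⟨L, B, hB⟩ := exists_testBound hφ hφc
  refine continuous_of_uniform_approx_of_continuous fun u hu => ?_
  obtain ⟨ε, hε, hεu⟩ := mem_uniformity_dist.1 hu
  obtain ⟨ψ, L', B', hψ, hp⟩ := h.exists_isPullback htop hB hs ht hst (half_pos hε)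
  exact ⟨ψ, hψ.contDiff.continuous, fun x => hεu <|
    (hX.abs_comp_sub_le h hs ht hp x).trans_lt (half_lt_self hε)⟩

theorem measurable (hX : IsFlow T hT V X) (h : IsControlled T V A ρ)
    (htop : ∫⁻ r in Ioo (0 : ℝ) 1, ENNReal.ofReal (1 / ρ r) = ⊤) (hs : s ∈ Icc 0 T)
    (ht : t ∈ Icc 0 T) : Measurable (X s t) := by
  rcases le_total s t with hst | hst
  · exact (hX.continuous_of_le h htop hs ht hst).measurable
  · have hemb : MeasurableEmbedding (X t s) :=
      (hX.continuous_of_le h htop ht hs hst).measurableEmbedding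
        (Function.LeftInverse.injective (hX.apply_apply hs ht))
    have hid : X t s ∘ X s t = id := funext (hX.apply_apply ht hs)
    exact hemb.measurable_comp_iff.1 (hid ▸ measurable_id)

theorem sInt_eq_sInt_comp (hX : IsFlow T hT V X) (h : IsControlled T V A ρ)
    (htop : ∫⁻ r in Ioo (0 : ℝ) 1, ENNReal.ofReal (1 / ρ r) = ⊤)
    {M : ℝ} {μ : ℝ → SignedMeasure 𝔼} (hμ : IsBoundedSolution T V M μ) (hs : s ∈ Icc 0 T)
    (ht : t ∈ Icc 0 T) (hst : s ≤ t) {L B : ℝ} (hφ : TestBound φ L B) :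
    sInt (μ t) φ = sInt (μ s) fun x => φ (X s t x) := by
  have hcomp : Integrable (fun x => φ (X s t x)) (μ s).totalVariation :=
    (hφ.integrable ((μ s).totalVariation.map (X s t))).comp_measurable
      (hX.measurable h htop hs ht)
  have hle (ε : ℝ) (hε : 0 < ε) :
      |sInt (μ t) φ - sInt (μ s) fun x => φ (X s t x)| ≤ M * ε + M * ε := by
    obtain ⟨ψ, L', B', hψ, hp⟩ := h.exists_isPullback htop hφ hs ht hst hε
    refine (abs_sub_le _ (sInt (μ s) ψ) _).trans (add_le_add (hp M μ hμ) ?_)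
    rw [abs_sub_comm]
    exact abs_sInt_sub_le (hμ.totalVariation_le s hs) hcomp (hψ.integrable _)
      (hX.abs_comp_sub_le h hs ht hp)
  have hlim : Tendsto (fun ε : ℝ => M * ε + M * ε) (𝓝[>] 0) (𝓝 0) := by
    have hcont : Continuous fun ε : ℝ => M * ε + M * ε := by fun_prop
    simpa using (hcont.tendsto 0).mono_left nhdsWithin_le_nhds
  exact sub_eq_zero.1 (abs_nonpos_iff.1 (ge_of_tendsto hlim (eventually_mem_nhdsWithin.mono hle)))

theorem eq_map_of_le (hX : IsFlow T hT V X) (h : IsControlled T V A ρ)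
    (htop : ∫⁻ r in Ioo (0 : ℝ) 1, ENNReal.ofReal (1 / ρ r) = ⊤)
    {M : ℝ} {μ : ℝ → SignedMeasure 𝔼} (hμ : IsBoundedSolution T V M μ) (hs : s ∈ Icc 0 T)
    (ht : t ∈ Icc 0 T) (hst : s ≤ t) : μ t = (μ s).map (X s t) :=
  eq_map_of_forall_sInt_eq (hX.measurable h htop hs ht) fun _ hφ hφc =>
    let ⟨_, _, hB⟩ := exists_testBound hφ hφc
    hX.sInt_eq_sInt_comp h htop hμ hs ht hst hB

end IsFlow

end Transport

theorem measurable_iSup_of_continuous {α X β : Type*} [MeasurableSpace α] [TopologicalSpace X]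
    [TopologicalSpace.SeparableSpace X] [ConditionallyCompleteLinearOrder β] [TopologicalSpace β]
    [OrderTopology β] [SecondCountableTopology β] [MeasurableSpace β] [BorelSpace β]
    {f : α → X → β} (hf : ∀ x, Measurable fun a => f a x) (hc : ∀ a, Continuous (f a)) :
    Measurable fun a => ⨆ x, f a x := by
  obtain ⟨S, hS, hSd⟩ := TopologicalSpace.exists_countable_dense X
  have := hS.to_subtype
  simp only [← hSd.ciSup' (hc _)]
  exact Measurable.iSup fun x : S => hf x

theorem exists_isControlled {E : Type*} [NormedAddCommGroup E] [MeasurableSpace E] [BorelSpace E]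
    [SecondCountableTopology E] {T : ℝ} {V : ℝ → E → E} {C ρ : ℝ → ℝ}
    (hVm : Measurable (Function.uncurry V)) (hVc : ∀ t, Continuous (V t))
    (hbound : (∫⁻ t in Icc (0 : ℝ) T, ⨆ x, (‖V t x‖₊ : ℝ≥0∞)) < ⊤) (hC0 : ∀ t, 0 ≤ C t)
    (hC : IntegrableOn C (Ioo 0 T)) (hmono : MonotoneOn ρ (Ico 0 1)) (hρ : ∀ r, 0 ≤ ρ r)
    (hosc : ∀ t x y, ‖x - y‖ < 1 → ‖V t x - V t y‖ ≤ C t * ρ ‖x - y‖) :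
    ∃ A, IsControlled T V A ρ := by
  have hm : Measurable fun t => ⨆ x, (‖V t x‖₊ : ℝ≥0∞) :=
    measurable_iSup_of_continuous
      (fun x => (hVm.comp (measurable_id.prodMk measurable_const)).nnnorm.coe_nnreal_ennreal)
      fun t => ENNReal.continuous_coe.comp (hVc t).nnnorm
  refine ⟨fun t => C t + (⨆ x, (‖V t x‖₊ : ℝ≥0∞)).toReal, hVm, hVc,
    fun t => add_nonneg (hC0 t) ENNReal.toReal_nonneg, ?_, ?_, hmono, hρ,
    Eventually.of_forall fun t x y hxy => ?_⟩
  · exact ((integrableOn_Icc_iff_integrableOn_Ioo).2 hC).add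
      (integrable_toReal_of_lintegral_ne_top hm.aemeasurable hbound.ne)
  · filter_upwards [ae_lt_top hm hbound.ne] with t ht x
    have hle : ‖V t x‖ ≤ (⨆ x, (‖V t x‖₊ : ℝ≥0∞)).toReal :=
      ENNReal.toReal_mono ht.ne (le_iSup (fun x => (‖V t x‖₊ : ℝ≥0∞)) x)
    exact le_add_of_nonneg_of_le (hC0 t) hle
  · exact (hosc t x y hxy).trans (mul_le_mul_of_nonneg_right
      (le_add_of_nonneg_right ENNReal.toReal_nonneg) (hρ _))

theorem stmt19_general {d : ℕ} {T : ℝ} {hT : 0 ≤ T}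
    {V : ℝ → EuclideanSpace ℝ (Fin d) → EuclideanSpace ℝ (Fin d)} {A ρ : ℝ → ℝ}
    (h : IsControlled T V A ρ)
    (hOsgood : ∫⁻ r in Ioo (0 : ℝ) 1, ENNReal.ofReal (1 / ρ r) = ⊤)
    {X : ℝ → ℝ → EuclideanSpace ℝ (Fin d) → EuclideanSpace ℝ (Fin d)} (hX : IsFlow T hT V X)
    {M : ℝ} {μ : ℝ → SignedMeasure (EuclideanSpace ℝ (Fin d))} (hμ : IsBoundedSolution T V M μ) :
    ∀ s ∈ Icc 0 T, ∀ t ∈ Icc 0 T, μ t = (μ s).map (X s t) := by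
  intro s hs t ht
  rcases le_total s t with hst | hst
  · exact hX.eq_map_of_le h hOsgood hμ hs ht hst
  · have hm := hX.measurable h hOsgood hs ht
    have hm' := hX.measurable h hOsgood ht hs
    have hid : X s t ∘ X t s = id := funext (hX.apply_apply hs ht)
    ext E hE
    rw [hX.eq_map_of_le h hOsgood hμ ht hs hst, VectorMeasure.map_apply _ hm hE,
      VectorMeasure.map_apply _ hm' (hm hE), ← preimage_comp, hid,
      preimage_id]

/-- if `V ∈ 𝒞` satisfies the Osgood condition and `X` is the
associated flow solving the ODE, then every norm-bounded signed-measure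
solution `(μ_t)` of the continuity equation satisfies
`μ_t = (X_s^t)_♯ μ_s` for all `s, t ∈ [0,T]`. -/
theorem stmt19 (d : ℕ) (T : ℝ) (hT : 0 ≤ T)
    (V : ℝ → EuclideanSpace ℝ (Fin d) → EuclideanSpace ℝ (Fin d))
    (hVmeas : Measurable (Function.uncurry V))
    (hVcont : ∀ t, Continuous (V t))
    (hbound : (∫⁻ t in Set.Icc (0:ℝ) T, ⨆ x, (‖V t x‖₊ : ℝ≥0∞)) < ⊤)
    (C : ℝ → ℝ) (hC0 : ∀ t, 0 ≤ C t)
    (hCint : IntegrableOn C (Set.Ioo (0:ℝ) T))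
    (ρ : ℝ → ℝ)
    (hρ_cont : ContinuousOn ρ (Set.Ico (0:ℝ) 1))
    (hρ_mono : MonotoneOn ρ (Set.Ico (0:ℝ) 1))
    (hρ0 : ρ 0 = 0) (hρ_nonneg : ∀ s, 0 ≤ ρ s)
    (hOsgood : (∫⁻ s in Set.Ioo (0:ℝ) 1, ENNReal.ofReal (1 / ρ s)) = ⊤)
    (hOsg : ∀ (t : ℝ) (x y : EuclideanSpace ℝ (Fin d)), ‖x - y‖ < 1 →
      ‖V t x - V t y‖ ≤ C t * ρ ‖x - y‖)
    (X : ℝ → ℝ → EuclideanSpace ℝ (Fin d) → EuclideanSpace ℝ (Fin d))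
    (hX : IsFlow T hT V X)
    (hXmeas : ∀ s t : ℝ, Measurable (X s t))
    (μ : ℝ → MeasureTheory.SignedMeasure (EuclideanSpace ℝ (Fin d)))
    (hμsol : IsSignedSolution T V μ)
    (hμbdd : ∃ M : ℝ≥0∞, M < ⊤ ∧ ∀ t, (μ t).totalVariation Set.univ ≤ M) :
    ∀ s ∈ Set.Icc (0:ℝ) T, ∀ t ∈ Set.Icc (0:ℝ) T,
      μ t = (μ s).map (X s t) := by
  obtain ⟨A, h⟩ := exists_isControlled hVmeas hVcont hbound hC0 hCint hρ_mono hρ_nonneg hOsg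
  obtain ⟨M, hM, hμM⟩ := hμbdd
  exact stmt19_general h hOsgood hX ⟨hμsol, fun t _ => ENNReal.toReal_mono hM.ne (hμM t)⟩
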